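/- Let p be an odd prime, let k ≥ 1, and let H ≤ S_{p^k} be the stabilizer of the partition of {1,…,p^k} into the p consecutive blocks of size p^{k-1} (so H is isomorphic to the wreath product S_{p^{k-1}} ≀ S_p). Then for every χ ∈ Irr_{p'}(S_{p^k}), the restriction of χ to H has a unique irreducible constituent χ* of degree coprime to p; this constituent occurs with multiplicity 1, and every other irreducible constituent of the restriction has degree divisible by p. Moreover, the map χ ↦ χ* is a bijection from Irr_{p'}(S_{p^k}) onto Irr_{p'}(H). -/

import Mathlib

open scoped Classical

noncomputable section

/-- The set of irreducible complex characters of a group `G`. -/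
def Irr (G : Type) [Group G] : Set (G → ℂ) :=
  {χ | ∃ V : FDRep ℂ G, CategoryTheory.Simple V ∧ FDRep.character V = χ}

/-- The set of irreducible complex characters of `G` whose degree is coprime to `p`. -/
def IrrCoprime (p : ℕ) (G : Type) [Group G] : Set (G → ℂ) :=
  {χ | ∃ V : FDRep ℂ G, CategoryTheory.Simple V ∧ FDRep.character V = χ ∧
    Nat.Coprime (Module.finrank ℂ V) p}

/-- The inner product `⟨χ|_H, ψ⟩` of the restriction of a class function `χ` of `G`
to a subgroup `H` with a class function `ψ` of `H`. -/
def charInner {G : Type} [Group G] (H : Subgroup G) (χ : G → ℂ) (ψ : ↥H → ℂ) : ℂ :=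
  (Nat.card ↥H : ℂ)⁻¹ * ∑ᶠ h : ↥H, χ ↑h * (starRingEnd ℂ) (ψ h)

/-- permutation matrix -/
def pm {α : Type} [DecidableEq α] (σ : Equiv.Perm α) : Matrix α α ℂ := fun i j => if i = σ j then 1 else 0

/-- `det (1 + t σ)` -/
def DD {α : Type} [Fintype α] [DecidableEq α] (t : ℂ) (σ : Equiv.Perm α) : ℂ := (1 + t • pm σ).det

theorem det_one_add_smul_minors {α : Type} [Fintype α] [DecidableEq α] (t : ℂ) (M : Matrix α α ℂ) :
    (1 + t • M).det = ∑ A : Finset α, t ^ A.card *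
      (M.submatrix (Subtype.val : A → α) (Subtype.val : A → α)).det := by
  have h1 : (1 + t • M).det = Polynomial.eval t
      (Matrix.det (1 + (Polynomial.X : Polynomial ℂ) • M.map Polynomial.C)) := by
    rw [← Polynomial.coe_evalRingHom, RingHom.map_det]
    congr 1
    ext i j
    simp [Matrix.one_apply]
    split_ifs <;> simp [mul_comm]
  rw [h1, Polynomial.eval_eq_sum_range]
  have h2 : (Matrix.det (1 + (Polynomial.X : Polynomial ℂ) • M.map Polynomial.C)).natDegree
      < Fintype.card α + 1 := by
    refine Nat.lt_succ_of_le ?_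
    rw [add_comm]
    have := Polynomial.natDegree_det_X_add_C_le M 1
    simpa using this
  rw [← Polynomial.eval_eq_sum_range, Polynomial.eval_eq_sum_range' h2]
  simp_rw [Matrix.coeff_det_one_add_X_smul_eq_sum_minors]
  rw [← Finset.powerset_univ, Finset.sum_powerset, Finset.card_univ]
  refine Finset.sum_congr rfl fun k _ => ?_
  rw [Finset.sum_mul]
  refine Finset.sum_congr rfl fun A hA => ?_
  rw [(Finset.mem_powersetCard.1 hA).2, mul_comm]

theorem DD_expand {α : Type} [Fintype α] [DecidableEq α] (t : ℂ) (σ : Equiv.Perm α) :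
    DD t σ = ∑ A : Finset α, t ^ A.card * ∑ s : Equiv.Perm A,
      if (∀ a : A, σ a = s a) then ((Equiv.Perm.sign s : ℤ) : ℂ) else 0 := by
  rw [DD, det_one_add_smul_minors]
  refine Finset.sum_congr rfl fun A _ => ?_
  rw [Matrix.det_apply']
  congr 1
  refine Finset.sum_congr rfl fun s _ => ?_
  simp only [Matrix.submatrix_apply, pm]
  rw [Finset.prod_ite_zero]
  simp only [Finset.prod_const_one, Finset.mem_univ, forall_true_left, mul_ite, mul_one, mul_zero, eq_comm]

theorem sum_DD_mul {α : Type} [Fintype α] [DecidableEq α] (t : ℂ) (Fn : Equiv.Perm α → ℂ) :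
    ∑ σ, DD t σ * Fn σ = ∑ A : Finset α, t ^ A.card * ∑ s : Equiv.Perm {a // a ∈ A},
      ∑ s' : Equiv.Perm {a // a ∉ A},
      ((Equiv.Perm.sign s : ℤ) : ℂ) * Fn (Equiv.Perm.subtypeCongr s s') := by
  simp_rw [DD_expand, Finset.sum_mul]
  rw [Finset.sum_comm]
  refine Finset.sum_congr rfl fun A _ => ?_
  simp_rw [mul_assoc, ← Finset.mul_sum]
  congr 1
  simp_rw [Finset.sum_mul]
  rw [Finset.sum_comm]
  apply Fintype.sum_congr
  intro s
  rw [Finset.mul_sum]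
  simp_rw [ite_mul, zero_mul]
  rw [← Finset.sum_filter]
  symm
  refine Finset.sum_bij (fun s' _ => Equiv.Perm.subtypeCongr s s') ?_ ?_ ?_ ?_
  · intro s' _
    simp only [Finset.mem_filter, Finset.mem_univ, true_and]
    exact fun a => Equiv.Perm.subtypeCongr.left_apply _ _ a.2
  · intro a _ b _ h
    exact (Prod.ext_iff.1 (Equiv.Perm.subtypeCongrHom_injective (fun a => a ∈ A)
      (a₁ := (s, a)) (a₂ := (s, b)) h)).2
  · intro σ hσ
    simp only [Finset.mem_filter, Finset.mem_univ, true_and] at hσ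
    have key : ∀ x, x ∉ A ↔ σ x ∉ A := by
      intro x
      rw [not_iff_not]
      constructor
      · intro hx
        rw [hσ ⟨x, hx⟩]; exact (s ⟨x, hx⟩).2
      · intro hx
        obtain ⟨y, hy⟩ := s.surjective ⟨σ x, hx⟩
        have : σ y = σ x := by rw [hσ y, hy]
        rw [← σ.injective this]; exact y.2
    refine ⟨σ.subtypePerm (fun x => (key x).symm), Finset.mem_univ _, ?_⟩
    ext x
    by_cases hx : x ∈ A
    · rw [Equiv.Perm.subtypeCongr.left_apply _ _ hx, hσ ⟨x, hx⟩]
    · rw [Equiv.Perm.subtypeCongr.right_apply _ _ hx]; simp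
  · intro s' _; rfl

theorem DD_reindex {α β : Type} [Fintype α] [DecidableEq α] [Fintype β] [DecidableEq β] (e : α ≃ β) (t : ℂ) (σ : Equiv.Perm α)
    (σ' : Equiv.Perm β) (h : ∀ a, e (σ a) = σ' (e a)) : DD t σ = DD t σ' := by
  rw [DD, DD, ← Matrix.det_submatrix_equiv_self e]
  congr 1
  ext i j
  simp [pm, Matrix.one_apply, ← h]

theorem DD_subtypeCongr {α : Type} [Fintype α] [DecidableEq α] (t : ℂ) (p : α → Prop) [DecidablePred p]
    (s : Equiv.Perm {a // p a}) (s' : Equiv.Perm {a // ¬ p a}) :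
    DD t (Equiv.Perm.subtypeCongr s s') = DD t s * DD t s' := by
  have : DD t (Equiv.sumCongr s s') = DD t (Equiv.Perm.subtypeCongr s s') := by
    apply DD_reindex (Equiv.sumCompl p)
    rintro (a | a) <;> simp [Equiv.Perm.subtypeCongr]
  rw [← this, DD, DD, DD, ← Matrix.det_fromBlocks_zero₂₁ _ 0 _]
  congr 1
  ext (i | i) (j | j) <;> simp [pm, Matrix.one_apply]

theorem sum_sign {α : Type} [Fintype α] [DecidableEq α] :
    ∑ s : Equiv.Perm α, ((Equiv.Perm.sign s : ℤ) : ℂ) =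
      (Fintype.card α).factorial * (if Fintype.card α ≤ 1 then 1 else 0) := by
  split_ifs with h
  · have : Subsingleton α := Fintype.card_le_one_iff_subsingleton.1 h
    have h2 : (Fintype.card α).factorial = 1 := by
      interval_cases Fintype.card α <;> rfl
    have : ∀ s : Equiv.Perm α, s = 1 := fun s => Subsingleton.elim _ _
    rw [h2, Fintype.sum_eq_single (1 : Equiv.Perm α)]
    · simp
    · intro x hx; exact absurd (this x) hx
  · have : Nontrivial α := Fintype.one_lt_card_iff_nontrivial.1 (by omega)
    obtain ⟨a, b, hab⟩ := exists_pair_ne α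
    have h3 : ∑ s : Equiv.Perm α, ((Equiv.Perm.sign s : ℤ) : ℂ) =
        ∑ s : Equiv.Perm α, ((Equiv.Perm.sign (Equiv.swap a b * s) : ℤ) : ℂ) :=
      (Fintype.sum_equiv (Equiv.mulLeft (Equiv.swap a b)) _ _ (fun _ => rfl)).symm
    simp only [Equiv.Perm.sign_mul, Equiv.Perm.sign_swap hab] at h3
    push_cast at h3
    simp only [neg_mul, one_mul, Finset.sum_neg_distrib] at h3
    rw [mul_zero]
    linear_combination h3 / 2

theorem sum_finset_fact {α : Type} [Fintype α] [DecidableEq α] (g : ℕ → ℕ → ℂ) :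
    ∑ A : Finset α, ((A.card.factorial : ℂ) * ((Fintype.card α - A.card).factorial)) *
      g A.card (Fintype.card α - A.card) =
    (Fintype.card α).factorial *
      ∑ k ∈ Finset.range (Fintype.card α + 1), g k (Fintype.card α - k) := by
  have := Finset.sum_powerset_apply_card (fun k => ((k.factorial : ℂ) *
    ((Fintype.card α - k).factorial)) * g k (Fintype.card α - k)) (x := (Finset.univ : Finset α))
  rw [Finset.powerset_univ, Finset.card_univ] at this
  rw [this, Finset.mul_sum]
  refine Finset.sum_congr rfl fun k hk => ?_
  have hk : k ≤ Fintype.card α := by simpa [Nat.lt_succ_iff] using hk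
  rw [← Nat.choose_mul_factorial_mul_factorial hk, nsmul_eq_mul]
  push_cast; ring

theorem card_compl_A {α : Type} [Fintype α] [DecidableEq α] (A : Finset α) :
    Fintype.card {a // a ∉ A} = Fintype.card α - A.card := by
  rw [Fintype.card_subtype_compl]; simp

/-- `avg D` -/
def Jf (u : ℂ) (m : ℕ) : ℂ := if m = 0 then 1 else 1 + u
def Kf (u : ℂ) (m : ℕ) : ℂ := if m = 0 then 1 else u ^ (m - 1) * (1 + u)

theorem sum_DD {α : Type} [Fintype α] [DecidableEq α] (u : ℂ) :
    ∑ σ : Equiv.Perm α, DD u σ = (Fintype.card α).factorial * Jf u (Fintype.card α) := by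
  have := sum_DD_mul (α := α) u (fun _ => (1:ℂ))
  simp only [mul_one, Finset.sum_const, Finset.card_univ, Fintype.card_perm, sum_sign,
    card_compl_A, Fintype.card_coe, nsmul_eq_mul, ← Finset.mul_sum] at this
  rw [this]
  have h := sum_finset_fact (α := α) (fun k _ => u ^ k * (if k ≤ 1 then 1 else 0))
  rw [show Jf u (Fintype.card α) = ∑ k ∈ Finset.range (Fintype.card α + 1), u ^ k * (if k ≤ 1 then 1 else 0) from ?_, ← h]
  · refine Finset.sum_congr rfl fun A _ => ?_
    ring
  · rcases Fintype.card α with _ | m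
    · simp [Jf]
    · rw [Finset.sum_range_succ', Finset.sum_range_succ']
      simp [Jf, add_comm]

theorem sum_sign_DD {α : Type} [Fintype α] [DecidableEq α] (u : ℂ) :
    ∑ σ : Equiv.Perm α, ((Equiv.Perm.sign σ : ℤ) : ℂ) * DD u σ =
      (Fintype.card α).factorial * Kf u (Fintype.card α) := by
  have := sum_DD_mul (α := α) u (fun σ => ((Equiv.Perm.sign σ : ℤ) : ℂ))
  have e : ∀ (A : Finset α) (s : Equiv.Perm {a // a ∈ A}) (s' : Equiv.Perm {a // a ∉ A}),
      ((Equiv.Perm.sign s : ℤ) : ℂ) * ((Equiv.Perm.sign (Equiv.Perm.subtypeCongr s s') : ℤ) : ℂ)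
      = ((Equiv.Perm.sign s' : ℤ) : ℂ) := by
    intro A s s'
    have h0 : Equiv.Perm.sign (Equiv.Perm.subtypeCongr s s') =
        Equiv.Perm.sign s * Equiv.Perm.sign s' := by
      convert! Equiv.Perm.sign_subtypeCongr s s'
    rw [h0]
    rcases Int.units_eq_one_or (Equiv.Perm.sign s) with h | h <;> rw [h] <;> simp
  simp only [e] at this
  simp_rw [mul_comm _ (DD u _)]
  rw [this]
  simp only [sum_sign, Finset.sum_const, Finset.card_univ, Fintype.card_perm, card_compl_A, Fintype.card_coe,
    nsmul_eq_mul]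
  have hs : ∀ A : Finset α, ∑ s : Equiv.Perm {a // a ∉ A}, ((Equiv.Perm.sign s : ℤ) : ℂ) = _ :=
    fun A => sum_sign (α := {a // a ∉ A})
  have h := sum_finset_fact (α := α) (fun k l => u ^ k * (if l ≤ 1 then 1 else 0))
  rw [show Kf u (Fintype.card α) = ∑ k ∈ Finset.range (Fintype.card α + 1), u ^ k * (if Fintype.card α - k ≤ 1 then 1 else 0) from ?_, ← h]
  · refine Finset.sum_congr rfl fun A _ => ?_
    ring
  · rcases Fintype.card α with _ | m
    · simp [Kf]
    · rw [Finset.sum_range_succ, Finset.sum_range_succ, Finset.sum_eq_zero]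
      · simp [Kf]; ring
      · intro k hk
        have : ¬ (m + 1 - k ≤ 1) := by have := Finset.mem_range.1 hk; omega
        simp [this]

theorem sum_DD_DD {α : Type} [Fintype α] [DecidableEq α] [Nonempty α] (t u : ℂ) :
    ∑ σ : Equiv.Perm α, DD t σ * DD u σ = (Fintype.card α).factorial *
      ((1 + t) * (1 + u) * ∑ r ∈ Finset.range (Fintype.card α), (t * u) ^ r) := by
  rw [sum_DD_mul]
  have hd : ∀ (A : Finset α) (s : Equiv.Perm {a // a ∈ A}) (s' : Equiv.Perm {a // a ∉ A}),
      DD u (Equiv.Perm.subtypeCongr s s') = DD u s * DD u s' := by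
    intro A s s'
    convert! DD_subtypeCongr u (fun a => a ∈ A) s s'
  simp only [hd]
  have e : ∀ A : Finset α, ∑ s : Equiv.Perm {a // a ∈ A}, ∑ s' : Equiv.Perm {a // a ∉ A},
      ((Equiv.Perm.sign s : ℤ) : ℂ) * (DD u s * DD u s') =
      (A.card.factorial * Kf u A.card) * ((Fintype.card α - A.card).factorial *
        Jf u (Fintype.card α - A.card)) := by
    intro A
    simp_rw [← mul_assoc, ← Finset.mul_sum]
    rw [← Finset.sum_mul, sum_sign_DD, sum_DD, card_compl_A, Fintype.card_coe]
    ring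
  simp only [e]
  have h := sum_finset_fact (α := α) (fun k l => t ^ k * Kf u k * Jf u l)
  have h2 : (1 + t) * (1 + u) * ∑ r ∈ Finset.range (Fintype.card α), (t * u) ^ r
    = ∑ k ∈ Finset.range (Fintype.card α + 1), t ^ k * Kf u k * Jf u (Fintype.card α - k) := by
    obtain ⟨m, hm⟩ : ∃ m, Fintype.card α = m + 1 := ⟨Fintype.card α - 1, by have := Fintype.card_pos (α := α); omega⟩
    rw [hm, Finset.sum_range_succ _ (m + 1), Finset.sum_range_succ' (fun k => t ^ k * Kf u k * Jf u (m + 1 - k)) m]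
    have : ∀ k ∈ Finset.range m, t ^ (k+1) * Kf u (k+1) * Jf u (m + 1 - (k + 1)) =
        t * (1 + u) ^ 2 * (t * u) ^ k := by
      intro k hk
      have : m + 1 - (k+1) ≠ 0 := by have := Finset.mem_range.1 hk; omega
      simp only [Kf, Jf, this]
      simp [mul_pow]
      ring
    rw [Finset.sum_congr rfl this, ← Finset.mul_sum]
    simp only [Kf, Jf, Nat.sub_self]
    simp
    have g1 := Finset.sum_range_succ (fun r => (t * u) ^ r) m
    have g2 := Finset.sum_range_succ' (fun r => (t * u) ^ r) m
    simp_rw [pow_succ, ← Finset.sum_mul] at g2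
    rw [g1] at g2
    rw [g1]
    simp only [mul_pow] at g2 ⊢
    linear_combination (1 + u) * g2
  rw [h2, ← h]
  refine Finset.sum_congr rfl fun A _ => ?_
  ring

/-- exterior power of a matrix -/
def extM {I : Type} [Fintype I] [LinearOrder I] [DecidableEq I] (r : ℕ) :
    Matrix I I ℂ →* Matrix (Set.powersetCard I r) (Set.powersetCard I r) ℂ where
  toFun M := LinearMap.toMatrix ((Pi.basisFun ℂ I).exteriorPower r) ((Pi.basisFun ℂ I).exteriorPower r)
    (exteriorPower.map r (Matrix.toLin' M))
  map_one' := by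
    rw [Matrix.toLin'_one, exteriorPower.map_id, LinearMap.toMatrix_id]
  map_mul' M N := by
    rw [Matrix.toLin'_mul, exteriorPower.map_comp, LinearMap.toMatrix_comp _ ((Pi.basisFun ℂ I).exteriorPower r)]

theorem trace_extM {I : Type} [Fintype I] [LinearOrder I] [DecidableEq I] (r : ℕ) (M : Matrix I I ℂ) :
    (extM r M).trace = ∑ A ∈ Finset.powersetCard r (Finset.univ : Finset I),
      (M.submatrix (Subtype.val : A → I) (Subtype.val : A → I)).det := by
  rw [Matrix.trace]
  have h1 : ∀ s : Set.powersetCard I r, (extM r M).diag s =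
      (M.submatrix (Subtype.val : s.1 → I) (Subtype.val : s.1 → I)).det := by
    intro s
    simp only [Matrix.diag_apply, extM, MonoidHom.coe_mk, OneHom.coe_mk, LinearMap.toMatrix_apply]
    rw [exteriorPower.basis_repr_apply, exteriorPower.basis_apply, exteriorPower.map_apply_ιMulti_family,
      exteriorPower.ιMulti_family, exteriorPower.ιMultiDual_apply_ιMulti]
    rw [← Matrix.det_transpose]
    rw [← Matrix.det_submatrix_equiv_self (Finset.orderIsoOfFin s.1 s.2).toEquiv]
    congr 1
    ext i j
    simp [Set.powersetCard.ofFinEmbEquiv_symm_apply, Matrix.toLin'_apply]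
    rfl
  simp_rw [h1]
  symm
  refine Finset.sum_bij (fun A hA => (⟨A, (Finset.mem_powersetCard.1 hA).2⟩ : Set.powersetCard I r)) ?_ ?_ ?_ ?_
  · intros; simp
  · intro a _ b _ h; exact Subtype.ext_iff.1 h
  · intro s _; exact ⟨s.1, Finset.mem_powersetCard.2 ⟨Finset.subset_univ _, s.2⟩, rfl⟩
  · intros; rfl

theorem det_eq_sum_trace {I : Type} [Fintype I] [LinearOrder I] [DecidableEq I] (t : ℂ) (M : Matrix I I ℂ) :
    (1 + t • M).det = ∑ r ∈ Finset.range (Fintype.card I + 1), (extM r M).trace * t ^ r := by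
  rw [det_one_add_smul_minors, ← Finset.powerset_univ, Finset.sum_powerset, Finset.card_univ]
  refine Finset.sum_congr rfl fun k _ => ?_
  rw [trace_extM, Finset.sum_mul]
  refine Finset.sum_congr rfl fun A hA => ?_
  rw [(Finset.mem_powersetCard.1 hA).2, mul_comm]

theorem star_trace_extM {I : Type} [Fintype I] [LinearOrder I] [DecidableEq I] (r : ℕ) (M : Matrix I I ℂ)
    (hM : ∀ i j, (starRingEnd ℂ) (M i j) = M i j) :
    (starRingEnd ℂ) (extM r M).trace = (extM r M).trace := by
  rw [trace_extM, map_sum]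
  refine Finset.sum_congr rfl fun A _ => ?_
  rw [RingHom.map_det]
  congr 1
  ext i j
  simp [hM]

/-- index of standard rep -/
abbrev St (n : ℕ) [NeZero n] := {i : Fin n // i ≠ 0}

theorem card_St (n : ℕ) [NeZero n] : Fintype.card (St n) + 1 = n := by
  rw [Fintype.card_subtype_compl]; simp
  have := NeZero.pos n
  omega

theorem sum_St {n : ℕ} [NeZero n] (f : Fin n → ℂ) : ∑ i : St n, f i = ∑ i, f i - f 0 := by
  have := Fintype.sum_subtype_add_sum_subtype (fun i : Fin n => i ≠ 0) f
  rw [← this]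
  have h2 : ∑ i : {x : Fin n // ¬ x ≠ 0}, f i = f 0 := by
    rw [Fintype.sum_eq_single ⟨0, by simp⟩]
    rintro ⟨x, hx⟩ h
    exact absurd (Subtype.ext (by simpa using hx)) h
  rw [h2]; simp

/-- the standard rep -/
def stR (n : ℕ) [NeZero n] : Equiv.Perm (Fin n) →* Matrix (St n) (St n) ℂ where
  toFun σ := Matrix.of fun i j => (if (i : Fin n) = σ j then 1 else 0) - (if (0 : Fin n) = σ j then 1 else 0)
  map_one' := by
    ext i j
    have := j.2
    simp [Matrix.one_apply, Subtype.ext_iff, this.symm]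
    rfl
  map_mul' σ τ := by
    ext i j
    rw [Matrix.mul_apply]
    simp only [Matrix.of_apply]
    rw [sum_St (fun x => ((if (i : Fin n) = σ x then 1 else 0) - (if (0 : Fin n) = σ x then 1 else 0)) *
      ((if x = τ j then 1 else 0) - (if (0 : Fin n) = τ j then 1 else 0)))]
    simp only [mul_sub, Finset.sum_sub_distrib, sub_mul, ← Finset.sum_mul]
    have e : ∀ i, ∑ x, (if i = σ x then (1:ℂ) else 0) = 1 := by
      intro i
      rw [Fintype.sum_eq_single (σ⁻¹ i)]
      · simp
      · intro x hx; rw [if_neg]; rintro rfl; simp at hx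
    simp [e]
    rfl

theorem det_single {β : Type} {_ : Fintype β} {_ : DecidableEq β} {M : Matrix β β ℂ} (b : β) (h : ∀ x, x = b) :
    M.det = M b b := by
  have : Subsingleton β := ⟨fun x y => (h x).trans (h y).symm⟩
  exact Matrix.det_eq_elem_of_subsingleton _ _

theorem DD_eq (n : ℕ) [NeZero n] (t : ℂ) (σ : Equiv.Perm (Fin n)) :
    DD t σ = (1 + t) * (1 + t • stR n σ).det := by
  let B : Matrix (Fin n) (Fin n) ℂ := Matrix.of fun i j => if j = 0 then 1 else if i = j then 1 else 0
  let N : Matrix (Fin n) (Fin n) ℂ := Matrix.of fun i j => if j = 0 then (if i = 0 then 1 else 0) else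
    if i = 0 then (if 0 = σ j then 1 else 0) else
      (if i = σ j then 1 else 0) - (if 0 = σ j then 1 else 0)
  have hB : B.det = 1 := by
    rw [Matrix.det_of_isLowerTriangular]
    · apply Finset.prod_eq_one
      intro i _; simp [B]
    · intro i j hij
      have hij : i < j := hij
      have : j ≠ 0 := fun h => by rw [h] at hij; exact absurd hij (by simp)
      simp [B, this, hij.ne]
  have hPB : pm σ * B = B * N := by
    ext i j
    simp only [Matrix.mul_apply, pm, B, N, Matrix.of_apply]
    by_cases hj : j = 0
    · subst hj
      rw [Fintype.sum_eq_single (σ⁻¹ i)]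
      · simp
      · intro x hx; rw [if_neg, zero_mul]; rintro rfl; simp at hx
    · simp only [hj, if_false]
      have key : ∀ x : Fin n, (if x = 0 then (1:ℂ) else if i = x then 1 else 0) *
          (if x = 0 then (if 0 = σ j then 1 else 0) else
            (if x = σ j then 1 else 0) - (if 0 = σ j then 1 else 0)) =
          (if x = 0 then (if 0 = σ j then 1 else 0) else 0) +
          (if i = x then (if i = 0 then 0 else
            (if i = σ j then 1 else 0) - (if 0 = σ j then 1 else 0)) else 0) := by
        intro x
        by_cases hx : x = 0
        · subst hx
          simp +contextual
        · simp only [hx, if_false, zero_add]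
          by_cases hi : i = x
          · subst hi; simp [hx]
          · simp [hi]
      simp_rw [key]
      rw [Finset.sum_add_distrib]
      simp only [Finset.sum_ite_eq, Finset.sum_ite_eq', Finset.mem_univ, if_true]
      by_cases hi : i = 0
      · subst hi; simp
      · simp [hi]
  have h1 : DD t σ * B.det = B.det * (1 + t • N).det := by
    rw [DD, ← Matrix.det_mul, ← Matrix.det_mul]
    congr 1
    rw [add_mul, mul_add, one_mul, mul_one, smul_mul_assoc, mul_smul_comm, hPB]
  rw [hB, mul_one, one_mul] at h1
  rw [h1, Matrix.twoBlockTriangular_det _ (fun i : Fin n => i = 0)]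
  · congr 1
    · rw [det_single (⟨0, rfl⟩ : {i : Fin n // i = 0}) (fun x => Subtype.ext x.2)]
      simp [Matrix.toSquareBlockProp_def, N]
    · congr 1
      ext i j
      have h1 := i.2
      have h2 := j.2
      simp only [Matrix.toSquareBlockProp_def, Matrix.of_apply, Matrix.add_apply, Matrix.smul_apply, N, h1, h2,
        if_false, stR, Matrix.one_apply, MonoidHom.coe_mk, OneHom.coe_mk, Subtype.ext_iff]
  · intro i hi j hj
    simp [N, hi, hj]

/-- hook characters -/
def chi (n : ℕ) [NeZero n] (r : ℕ) (σ : Equiv.Perm (Fin n)) : ℂ := (extM r (stR n σ)).trace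

theorem DD_chi (n : ℕ) [NeZero n] (t : ℂ) (σ : Equiv.Perm (Fin n)) :
    DD t σ = (1 + t) * ∑ r ∈ Finset.range n, chi n r σ * t ^ r := by
  rw [DD_eq, det_eq_sum_trace, card_St]
  rfl

theorem star_chi (n : ℕ) [NeZero n] (r : ℕ) (σ : Equiv.Perm (Fin n)) :
    (starRingEnd ℂ) (chi n r σ) = chi n r σ := by
  apply star_trace_extM
  intro i j
  simp [stR]

theorem coeff_unique (m : ℕ) (a b : ℕ → ℂ)
    (h : ∀ t : ℂ, t ≠ -1 → ∑ r ∈ Finset.range m, a r * t ^ r = ∑ r ∈ Finset.range m, b r * t ^ r) :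
    ∀ r < m, a r = b r := by
  have h2 : (∑ r ∈ Finset.range m, Polynomial.C (a r) * Polynomial.X ^ r) =
      ∑ r ∈ Finset.range m, Polynomial.C (b r) * Polynomial.X ^ r := by
    apply Polynomial.eq_of_infinite_eval_eq
    refine Set.Infinite.mono (s := {(-1 : ℂ)}ᶜ) ?_ (Set.Finite.infinite_compl (Set.finite_singleton _))
    intro t ht
    simpa [Polynomial.eval_finsetSum] using h t ht
  intro r hr
  have := congrArg (fun q => Polynomial.coeff q r) h2
  simpa [Polynomial.coeff_X_pow, hr] using this

theorem chi_orth (n : ℕ) [NeZero n] (r s : ℕ) (hr : r < n) (hs : s < n) :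
    ∑ σ : Equiv.Perm (Fin n), chi n r σ * chi n s σ = if r = s then (n.factorial : ℂ) else 0 := by
  have key : ∀ u : ℂ, u ≠ -1 → ∀ r < n, ∑ s ∈ Finset.range n,
      (∑ σ : Equiv.Perm (Fin n), chi n r σ * chi n s σ) * u ^ s = n.factorial * u ^ r := by
    intro u hu
    apply coeff_unique n
    intro t ht
    have hu' : 1 + u ≠ 0 := fun h => hu (by linear_combination h)
    have ht' : 1 + t ≠ 0 := fun h => ht (by linear_combination h)
    have h := sum_DD_DD (α := Fin n) t u
    simp_rw [DD_chi, Fintype.card_fin] at h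
    apply mul_left_cancel₀ (mul_ne_zero ht' hu')
    calc (1 + t) * (1 + u) * ∑ r ∈ Finset.range n, (∑ s ∈ Finset.range n,
          (∑ σ : Equiv.Perm (Fin n), chi n r σ * chi n s σ) * u ^ s) * t ^ r
        = ∑ σ : Equiv.Perm (Fin n), ((1 + t) * ∑ r ∈ Finset.range n, chi n r σ * t ^ r) *
            ((1 + u) * ∑ r ∈ Finset.range n, chi n r σ * u ^ r) := by
          have e2 : ∑ σ : Equiv.Perm (Fin n), (∑ r ∈ Finset.range n, chi n r σ * t ^ r) *
              (∑ s ∈ Finset.range n, chi n s σ * u ^ s) = ∑ r ∈ Finset.range n, (∑ s ∈ Finset.range n,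
              (∑ σ : Equiv.Perm (Fin n), chi n r σ * chi n s σ) * u ^ s) * t ^ r := by
            simp_rw [Finset.sum_mul_sum]
            rw [Finset.sum_comm]
            refine Finset.sum_congr rfl fun r _ => ?_
            rw [Finset.sum_comm, Finset.sum_mul]
            refine Finset.sum_congr rfl fun s _ => ?_
            rw [Finset.sum_mul, Finset.sum_mul]
            refine Finset.sum_congr rfl fun σ _ => ?_
            ring
          rw [← e2, Finset.mul_sum]
          refine Finset.sum_congr rfl fun σ _ => ?_
          ring
      _ = _ := by
          rw [h]
          simp_rw [mul_pow, Finset.mul_sum]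
          refine Finset.sum_congr rfl fun r _ => ?_
          ring
  have := coeff_unique n (fun s => ∑ σ : Equiv.Perm (Fin n), chi n r σ * chi n s σ)
    (fun s => if r = s then (n.factorial : ℂ) else 0) (by
      intro u hu
      rw [key u hu r hr]
      simp [hr]) s hs
  exact this

/-- no proper invariant subsets -/
def IsTr {α : Type} (σ : Equiv.Perm α) : Prop :=
  ∀ A : Set α, A.Nonempty → (∀ a ∈ A, σ a ∈ A) → A = Set.univ

theorem IsTr.DD {α : Type} [Fintype α] [DecidableEq α] [Nonempty α] {σ : Equiv.Perm α} (h : IsTr σ) (t : ℂ) :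
    DD t σ = 1 - (-1) ^ (Fintype.card α) * t ^ (Fintype.card α) := by
  have h1 : ∀ t, _root_.DD t σ = 1 + t ^ (Fintype.card α) * ((Equiv.Perm.sign σ : ℤ) : ℂ) := by
    intro t
    have hne : (∅ : Finset α) ≠ Finset.univ := by
      intro h; have := Finset.univ_nonempty (α := α); rw [← h] at this; simp at this
    rw [DD_expand, ← Finset.sum_subset (Finset.subset_univ {∅, Finset.univ}), Finset.sum_pair hne]
    · congr 1
      · have : ∀ s : Equiv.Perm (∅ : Finset α), s = 1 := fun s => by ext ⟨x, hx⟩; simp at hx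
        rw [Fintype.sum_eq_single 1 (fun s hs => absurd (this s) hs)]
        simp
      · rw [Finset.card_univ]
        congr 1
        let e : {x // x ∈ (Finset.univ : Finset α)} ≃ α := Equiv.subtypeUnivEquiv (by simp)
        rw [Fintype.sum_eq_single (e.symm.permCongr σ)]
        · rw [if_pos]
          · rw [Equiv.Perm.sign_permCongr]
          · intro a; simp [e, Equiv.permCongr_apply]
        · intro s hs
          rw [if_neg]
          intro hc
          apply hs
          ext a
          simp [e, ← hc]
    · intro A _ hA
      simp only [Finset.mem_insert, Finset.mem_singleton, not_or] at hA
      rw [Finset.sum_eq_zero, mul_zero]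
      intro s _
      rw [if_neg]
      intro hc
      apply hA.2
      have := h (A : Set α) (by simpa [Finset.nonempty_iff_ne_empty] using hA.1) (by
        intro a ha
        rw [hc ⟨a, ha⟩]; exact (s ⟨a, ha⟩).2)
      ext x
      simpa using Set.ext_iff.1 this x
  have h2 : _root_.DD (-1) σ = 0 := by
    rw [_root_.DD]
    rw [← Matrix.exists_vecMul_eq_zero_iff]
    refine ⟨fun _ => 1, fun hc => one_ne_zero (congrFun hc (Classical.arbitrary α)), ?_⟩
    ext j
    simp [Matrix.vecMul, dotProduct, pm, Matrix.one_apply, Finset.sum_add_distrib]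
  rw [h1] at h2
  rw [h1]
  have h3 : ((-1 : ℂ) ^ (Fintype.card α)) * (-1) ^ (Fintype.card α) = 1 := by
    rw [← mul_pow]; simp
  linear_combination (-1) ^ (Fintype.card α) * t ^ (Fintype.card α) * h2 - t ^ (Fintype.card α) *((Equiv.Perm.sign σ : ℤ) : ℂ) * h3

theorem IsTr.chi {n : ℕ} [NeZero n] {σ : Equiv.Perm (Fin n)} (h : IsTr σ) (r : ℕ) (hr : r < n) :
    chi n r σ = (-1) ^ r := by
  refine coeff_unique n (fun r => _root_.chi n r σ) (fun r => (-1) ^ r) ?_ r hr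
  intro t ht
  have ht' : 1 + t ≠ 0 := fun h => ht (by linear_combination h)
  apply mul_left_cancel₀ ht'
  rw [← DD_chi, h.DD, Fintype.card_fin]
  simp_rw [← mul_pow]
  have := mul_neg_geom_sum (-1 * t) n
  rw [← this]
  ring

/-- functions of coloured permutations which behave well under contraction -/
structure Contr {G : Type} [Group G] (φ : G → ℂ → ℂ)
    (Φ : (m : ℕ) → (Fin m → G) → (Fin m → ℂ) → Equiv.Perm (Fin m) → ℂ) : Prop where
  zero : ∀ x t τ, Φ 0 x t τ = 1
  fix : ∀ m x t e, Φ (m + 1) x t (Equiv.Perm.decomposeFin.symm (0, e)) =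
    φ (x 0) (t 0) * Φ m (fun i => x i.succ) (fun i => t i.succ) e
  con : ∀ m x t e (j : Fin m), Φ (m + 1) x t (Equiv.Perm.decomposeFin.symm (j.succ, e)) =
    Φ m (Pi.mulSingle (e⁻¹ j) (x 0) * fun i => x i.succ)
      (Pi.mulSingle (e⁻¹ j) (-t 0) * fun i => t i.succ) e

theorem decomp_cases {m : ℕ} (τ : Equiv.Perm (Fin (m + 1))) :
    (∃ e, τ = Equiv.Perm.decomposeFin.symm (0, e)) ∨
      ∃ (j : Fin m) (e : _), τ = Equiv.Perm.decomposeFin.symm (j.succ, e) := by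
  obtain ⟨⟨a, e⟩, rfl⟩ := Equiv.Perm.decomposeFin.symm.surjective τ
  rcases Fin.eq_zero_or_eq_succ a with rfl | ⟨j, rfl⟩
  · exact Or.inl ⟨e, rfl⟩
  · exact Or.inr ⟨j, e, rfl⟩

theorem Contr.unique {G : Type} [Group G] {φ : G → ℂ → ℂ} {Φ Ψ}
    (h : Contr φ Φ) (h' : Contr φ Ψ) : ∀ m x t τ, Φ m x t τ = Ψ m x t τ := by
  intro m
  induction m with
  | zero => intro x t τ; rw [h.zero, h'.zero]
  | succ m ih =>
    intro x t τ
    rcases decomp_cases τ with ⟨e, rfl⟩ | ⟨j, e, rfl⟩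
    · rw [h.fix, h'.fix, ih]
    · rw [h.con, h'.con, ih]

theorem Contr.mul {G : Type} [Group G] {φ ψ : G → ℂ → ℂ} {Φ Ψ}
    (h : Contr φ Φ) (h' : Contr ψ Ψ) : Contr (fun g s => φ g s * ψ g s) (fun m x t τ => Φ m x t τ * Ψ m x t τ) where
  zero x t τ := by rw [h.zero, h'.zero, mul_one]
  fix m x t e := by rw [h.fix, h'.fix]; ring
  con m x t e j := by rw [h.con, h'.con]

theorem Contr.star {G : Type} [Group G] {φ : G → ℂ → ℂ} {Φ}
    (h : Contr φ Φ) (hφ : ∀ g s, (starRingEnd ℂ) (φ g s) = φ g s) :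
    Contr φ (fun m x t τ => (starRingEnd ℂ) (Φ m x t τ)) where
  zero x t τ := by rw [h.zero, map_one]
  fix m x t e := by rw [h.fix, map_mul, hφ]
  con m x t e j := by rw [h.con]

theorem sum_cons {G : Type} [Fintype G] (m : ℕ) (f : (Fin (m + 1) → G) → ℂ) :
    ∑ x, f x = ∑ g : G, ∑ y : Fin m → G, f (Fin.cons g y) := by
  rw [← (Fin.consEquiv (fun _ : Fin (m + 1) => G)).sum_comp, Fintype.sum_prod_type]
  rfl

theorem sum_mulSingle {G : Type} [Group G] [Fintype G] (m : ℕ) (f : (Fin m → G) → ℂ) (j : Fin m) (g : G) :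
    ∑ y : Fin m → G, f ((Pi.mulSingle j g : Fin m → G) * y) = ∑ y, f y :=
  Fintype.sum_equiv (Equiv.mulLeft (Pi.mulSingle j g : Fin m → G)) _ _ (fun y => rfl)

theorem Contr.avg {G : Type} [Group G] [Fintype G] {φ : G → ℂ → ℂ}
    {Φ : (m : ℕ) → (Fin m → G) → (Fin m → ℂ) → Equiv.Perm (Fin m) → ℂ} (h : Contr φ Φ)
    (G' : Type) [Group G'] :
    Contr (G := G') (fun _ s => (Fintype.card G : ℂ)⁻¹ * ∑ g, φ g s)
      (fun m _ t τ => ((Fintype.card G : ℂ)⁻¹) ^ m * ∑ x : Fin m → G, Φ m x t τ) where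
  zero x t τ := by
    simp [h.zero]
  fix m x t e := by
    have : ∑ x : Fin (m + 1) → G, Φ (m + 1) x t (Equiv.Perm.decomposeFin.symm (0, e)) =
        (∑ g, φ g (t 0)) * ∑ x : Fin m → G, Φ m x (fun i => t i.succ) e := by
      rw [sum_cons, Finset.sum_mul_sum]
      refine Finset.sum_congr rfl fun g _ => Finset.sum_congr rfl fun y _ => ?_
      rw [h.fix]
      simp only [Fin.cons_zero, Fin.cons_succ]
    rw [this]
    ring
  con m x t e j := by
    have : ∑ x : Fin (m + 1) → G, Φ (m + 1) x t (Equiv.Perm.decomposeFin.symm (j.succ, e)) =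
        (Fintype.card G : ℂ) * ∑ y : Fin m → G, Φ m y
        (Pi.mulSingle (e⁻¹ j) (-t 0) * fun i => t i.succ) e := by
      rw [sum_cons, ← nsmul_eq_mul, ← Finset.card_univ, ← Finset.sum_const]
      refine Finset.sum_congr rfl fun g _ => ?_
      refine Eq.trans ?_ (sum_mulSingle m (fun y => Φ m y
        (Pi.mulSingle (e⁻¹ j) (-t 0) * fun i => t i.succ) e) (e⁻¹ j) g)
      refine Finset.sum_congr rfl fun y _ => ?_
      rw [h.con]
      simp only [Fin.cons_zero, Fin.cons_succ]
    have e2 : (Fintype.card G : ℂ) ≠ 0 := by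
      exact_mod_cast Fintype.card_ne_zero
    rw [this, pow_succ, mul_assoc, ← mul_assoc _ (Fintype.card G : ℂ), inv_mul_cancel₀ e2, one_mul]

theorem contr_sgn (G : Type) [Group G] (c : ℕ) : Contr (G := G) (fun _ s => s ^ c)
    (fun _ _ t τ => ((Equiv.Perm.sign τ : ℤ) : ℂ) ^ c * ∏ i, t i ^ c) where
  zero x t τ := by
    rw [Subsingleton.elim τ 1]; simp
  fix m x t e := by
    rw [Fin.prod_univ_succ]
    simp
    ring
  con m x t e j := by
    rw [Fin.prod_univ_succ]
    simp only [Pi.mul_apply, mul_pow, Finset.prod_mul_distrib]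
    have : ∏ i : Fin m, (Pi.mulSingle (e⁻¹ j) (-t 0) : Fin m → ℂ) i ^ c = (-t 0) ^ c := by
      rw [Fintype.prod_eq_single (e⁻¹ j)]
      · simp
      · intro x hx; rw [Pi.mulSingle_eq_of_ne hx, one_pow]
    rw [this]
    simp [Fin.succ_ne_zero]
    rw [neg_pow, neg_pow (t 0)]
    ring

theorem contr_delta (G : Type) [Group G] (P : Prop) [Decidable P] : Contr (G := G) (fun _ _ => if P then 1 else 0)
    (fun m _ _ _ => if m = 0 ∨ P then 1 else 0) where
  zero x t τ := by simp
  fix m x t e := by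
    by_cases P <;> simp [*]
  con m x t e j := by
    have : m ≠ 0 := by rintro rfl; exact j.elim0
    simp [this]

/-- tensor induced trace -/
def TT {G ι : Type} [Group G] [Fintype ι] [DecidableEq ι] (ρ : G →* Matrix ι ι ℂ) (m : ℕ) (x : Fin m → G)
    (τ : Equiv.Perm (Fin m)) : ℂ := ∑ f : Fin m → ι, ∏ i, ρ (x i) (f (τ i)) (f i)

theorem contr_TT {G ι : Type} [Group G] [Fintype ι] [DecidableEq ι] (ρ : G →* Matrix ι ι ℂ) :
    Contr (fun g _ => (ρ g).trace) (fun m x _ τ => TT ρ m x τ) where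
  zero x t τ := by simp [TT]
  fix m x t e := by
    rw [TT, ← (Fin.consEquiv (fun _ : Fin (m + 1) => ι)).sum_comp, Fintype.sum_prod_type]
    simp_rw [Fin.prod_univ_succ]
    simp [TT, Matrix.trace, Finset.sum_mul_sum]
  con m x t e j := by
    rw [TT, ← (Fin.consEquiv (fun _ : Fin (m + 1) => ι)).sum_comp, Fintype.sum_prod_type]
    rw [Finset.sum_comm, TT]
    refine Finset.sum_congr rfl fun f _ => ?_
    simp_rw [Fin.prod_univ_succ]
    simp only [Fin.consEquiv_apply, Fin.cons_zero, Fin.cons_succ,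
      Equiv.Perm.decomposeFin_symm_apply_zero, Equiv.Perm.decomposeFin_symm_apply_succ]
    rw [← Finset.mul_prod_erase Finset.univ _ (Finset.mem_univ (e⁻¹ j))]
    simp_rw [← Finset.mul_prod_erase (Finset.univ : Finset (Fin m)) _ (Finset.mem_univ (e⁻¹ j))]
    have h1 : ∀ a : ι, ∏ l ∈ Finset.univ.erase (e⁻¹ j), ρ (x l.succ)
        ((Fin.cons a f : Fin (m+1) → ι) ((Equiv.swap 0 j.succ) (e l).succ)) (f l) =
        ∏ l ∈ Finset.univ.erase (e⁻¹ j), ρ ((Pi.mulSingle (e⁻¹ j) (x 0) * fun i => x i.succ : Fin m → G) l)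
          (f (e l)) (f l) := by
      intro a
      refine Finset.prod_congr rfl fun l hl => ?_
      have hl : l ≠ e⁻¹ j := Finset.ne_of_mem_erase hl
      have hl2 : e l ≠ j := fun h => hl (by rw [← h]; simp)
      rw [Equiv.swap_apply_of_ne_of_ne (Fin.succ_ne_zero _) (by simpa using hl2)]
      rw [Pi.mul_apply, Pi.mulSingle_eq_of_ne hl, one_mul, Fin.cons_succ]
    change ∑ a : ι, _ * (_ * ∏ l ∈ Finset.univ.erase (e⁻¹ j), ρ (x l.succ)
        ((Fin.cons a f : Fin (m+1) → ι) ((Equiv.swap 0 j.succ) (e l).succ)) (f l)) = _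
    simp_rw [h1, ← mul_assoc]
    rw [← Finset.sum_mul]
    congr 1
    simp [Matrix.mul_apply]

/-- coloured determinant -/
def WD (F : Type) [Fintype F] [DecidableEq F] (m : ℕ) (x : Fin m → Equiv.Perm F) (t : Fin m → ℂ)
    (τ : Equiv.Perm (Fin m)) : ℂ :=
  (1 + Matrix.of (fun (p q : Fin m × F) => if p.1 = τ q.1 ∧ p.2 = x q.1 q.2 then t q.1 else 0)).det

/-- splitting off zero -/
def splitE (F : Type) (m : ℕ) : F ⊕ (Fin m × F) ≃ Fin (m + 1) × F where
  toFun := Sum.elim (fun a => (0, a)) (fun p => (p.1.succ, p.2))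
  invFun p := Fin.cases (motive := fun _ => F ⊕ (Fin m × F)) (Sum.inl p.2) (fun i => Sum.inr (i, p.2)) p.1
  left_inv := by rintro (a | ⟨i, a⟩) <;> simp
  right_inv := by
    rintro ⟨i, a⟩
    refine Fin.cases ?_ (fun i => ?_) i <;> simp

theorem contr_WD (F : Type) [Fintype F] [DecidableEq F] :
    Contr (fun (g : Equiv.Perm F) s => DD s g) (WD F) where
  zero x t τ := by simp [WD]
  fix m x t e := by
    rw [WD, ← Matrix.det_submatrix_equiv_self (splitE F m), WD, DD, ← Matrix.det_fromBlocks_zero₂₁ _ 0 _]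
    congr 1
    ext (a | ⟨i, a⟩) (b | ⟨l, b⟩) <;>
      simp [splitE, Matrix.one_apply, pm, Prod.ext_iff, Fin.succ_ne_zero, (Fin.succ_ne_zero _).symm]
  con m x t e j := by
    rw [WD, ← Matrix.det_submatrix_equiv_self (splitE F m), WD]
    rw [← Matrix.fromBlocks_toBlocks ((1 + Matrix.of (fun (p q : Fin (m+1) × F) => if p.1 = (Equiv.Perm.decomposeFin.symm (j.succ, e)) q.1 ∧ p.2 = x q.1 q.2 then t q.1 else 0)).submatrix (splitE F m) (splitE F m))]
    rw [show Matrix.toBlocks₁₁ _ = 1 from ?_, Matrix.det_fromBlocks_one₁₁]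
    · congr 1
      ext ⟨i, a⟩ ⟨l, b⟩
      by_cases hl : e l = j
      · subst hl
        simp [splitE, Matrix.toBlocks₁₂, Matrix.toBlocks₂₁, Matrix.toBlocks₂₂, Matrix.one_apply, Matrix.mul_apply, Fin.succ_ne_zero, ite_and]
        simp only [(Fin.succ_ne_zero l).symm, if_false, zero_add, sub_eq_add_neg]
        congr 1
        by_cases hi : i = e l
        · simp only [hi, if_true]
          rw [Fintype.sum_eq_single ((x l.succ) b)]
          · simp; split_ifs <;> simp
          · intro c hc; simp [hc]
        · simp [hi]
      · have hl2 : l ≠ e⁻¹ j := fun h => hl (by rw [h]; simp)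
        have hs : (Equiv.swap 0 j.succ) (e l).succ = (e l).succ :=
          Equiv.swap_apply_of_ne_of_ne (Fin.succ_ne_zero _) (by simpa using hl)
        simp only [splitE, Matrix.toBlocks₁₂, Matrix.toBlocks₂₁, Matrix.toBlocks₂₂, Matrix.one_apply, Matrix.mul_apply,
          Pi.mul_apply, Pi.mulSingle_eq_of_ne hl2, one_mul, Matrix.sub_apply, Matrix.of_apply, Matrix.submatrix_apply,
          Matrix.add_apply]
        simp [hs, (Fin.succ_ne_zero _).symm]
    · ext a b
      simp [splitE, Matrix.toBlocks₁₁, Matrix.one_apply, (Fin.succ_ne_zero _).symm]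

/-- hook representations -/
def chiRep (n : ℕ) [NeZero n] (r : ℕ) : Equiv.Perm (Fin n) →*
    Matrix (Set.powersetCard (St n) r) (Set.powersetCard (St n) r) ℂ := (extM r).comp (stR n)

theorem trace_chiRep (n : ℕ) [NeZero n] (r : ℕ) (σ : Equiv.Perm (Fin n)) :
    (chiRep n r σ).trace = chi n r σ := rfl

/-- base of X -/
def Tc (q : ℕ) [NeZero q] (c p : ℕ) (x : Fin p → Equiv.Perm (Fin q)) (τ : Equiv.Perm (Fin p)) : ℂ :=
  TT (chiRep q c) p x τ

theorem contr_Tc (q : ℕ) [NeZero q] (c : ℕ) :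
    Contr (fun (g : Equiv.Perm (Fin q)) _ => chi q c g) (fun p x _ τ => Tc q c p x τ) :=
  contr_TT (chiRep q c)

theorem star_Tc (q : ℕ) [NeZero q] (c p : ℕ) (x : Fin p → Equiv.Perm (Fin q)) (τ : Equiv.Perm (Fin p)) :
    (starRingEnd ℂ) (Tc q c p x τ) = Tc q c p x τ :=
  ((contr_Tc q c).star (fun g _ => star_chi q c g)).unique (contr_Tc q c) p x 0 τ

theorem card_perm_fin_ne (q : ℕ) : (q.factorial : ℂ) ≠ 0 := by exact_mod_cast q.factorial_ne_zero

theorem sum_Tc_Tc (q : ℕ) [NeZero q] (c c' p : ℕ) [NeZero p] (hc : c < q) (hc' : c' < q) (τ : Equiv.Perm (Fin p)) :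
    ∑ x : Fin p → Equiv.Perm (Fin q), Tc q c p x τ * Tc q c' p x τ =
      if c = c' then (q.factorial : ℂ) ^ p else 0 := by
  have h := ((contr_Tc q c).mul (contr_Tc q c')).avg Unit
  have e : (fun (_ : Unit) (_ : ℂ) => (Fintype.card (Equiv.Perm (Fin q)) : ℂ)⁻¹ *
      ∑ g : Equiv.Perm (Fin q), chi q c g * chi q c' g) = fun _ _ => if c = c' then 1 else 0 := by
    funext _ _
    rw [chi_orth q c c' hc hc', Fintype.card_perm, Fintype.card_fin]
    split_ifs
    · exact inv_mul_cancel₀ (card_perm_fin_ne q)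
    · simp
  rw [e] at h
  have h2 := h.unique (contr_delta Unit (c = c')) p (fun _ => ()) 0 τ
  rw [Fintype.card_perm, Fintype.card_fin] at h2
  have h3 : ((q.factorial : ℂ)⁻¹) ^ p ≠ 0 := pow_ne_zero _ (inv_ne_zero (card_perm_fin_ne q))
  apply mul_left_cancel₀ h3
  rw [h2]
  simp only [NeZero.ne p, false_or]
  split_ifs
  · rw [← mul_pow, inv_mul_cancel₀ (card_perm_fin_ne q), one_pow]
  · simp

theorem sum_DD_chi (q : ℕ) [NeZero q] (c : ℕ) (hc : c < q) (s : ℂ) :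
    ∑ g : Equiv.Perm (Fin q), DD s g * chi q c g = q.factorial * ((1 + s) * s ^ c) := by
  simp_rw [DD_chi, mul_assoc, Finset.sum_mul]
  rw [← Finset.mul_sum, Finset.sum_comm]
  have : ∀ r ∈ Finset.range q, ∑ g : Equiv.Perm (Fin q), chi q r g * s ^ r * chi q c g =
      (if r = c then (q.factorial : ℂ) * s ^ c else 0) := by
    intro r hr
    have h1 := chi_orth q r c (Finset.mem_range.1 hr) hc
    simp_rw [mul_right_comm _ (s ^ r)]
    rw [← Finset.sum_mul, h1]
    split_ifs with h
    · rw [h]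
    · simp
  rw [Finset.sum_congr rfl this]
  simp [hc]
  ring

theorem WD_one (p : ℕ) (t : ℂ) (τ : Equiv.Perm (Fin p)) : WD (Fin 1) p 1 (fun _ => t) τ = DD t τ := by
  rw [WD, DD, ← Matrix.det_submatrix_equiv_self (Equiv.prodUnique (Fin p) (Fin 1)).symm]
  congr 1
  ext i j
  simp [Matrix.one_apply, pm]

theorem sum_WD_Tc (q : ℕ) [NeZero q] (c p : ℕ) (hc : c < q) (t : ℂ) (τ : Equiv.Perm (Fin p)) :
    ∑ x : Fin p → Equiv.Perm (Fin q), WD (Fin q) p x (fun _ => t) τ * Tc q c p x τ =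
      (q.factorial : ℂ) ^ p * (DD t τ * (((Equiv.Perm.sign τ : ℤ) : ℂ) ^ c * (t ^ c) ^ p)) := by
  have h := ((contr_WD (Fin q)).mul (contr_Tc q c)).avg (Equiv.Perm (Fin 1))
  have e : (fun (_ : Equiv.Perm (Fin 1)) (s : ℂ) => (Fintype.card (Equiv.Perm (Fin q)) : ℂ)⁻¹ *
      ∑ g : Equiv.Perm (Fin q), DD s g * chi q c g) = fun g s => DD s g * s ^ c := by
    funext g s
    rw [sum_DD_chi q c hc, Fintype.card_perm, Fintype.card_fin, ← mul_assoc,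
      inv_mul_cancel₀ (card_perm_fin_ne q), one_mul]
    congr 1
    rw [DD, det_single 0 (fun x => Subsingleton.elim _ _)]
    have : (0 : Fin 1) = g 0 := Subsingleton.elim _ _
    simp [pm, ← this]
  rw [e] at h
  have h2 := h.unique ((contr_WD (Fin 1)).mul (contr_sgn _ c)) p 1 (fun _ => t) τ
  rw [Fintype.card_perm, Fintype.card_fin, WD_one] at h2
  have h3 : ((q.factorial : ℂ)⁻¹) ^ p ≠ 0 := pow_ne_zero _ (inv_ne_zero (card_perm_fin_ne q))
  apply mul_left_cancel₀ h3
  rw [h2, ← mul_assoc (_ ^ p), ← mul_pow, inv_mul_cancel₀ (card_perm_fin_ne q)]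
  simp

/-- the characters of the wreath product, in coordinates -/
def Xw (p q : ℕ) [NeZero p] [NeZero q] (c b : ℕ) (x : Fin p → Equiv.Perm (Fin q)) (τ : Equiv.Perm (Fin p)) : ℂ :=
  ((Equiv.Perm.sign τ : ℤ) : ℂ) ^ c * Tc q c p x τ * chi p b τ

theorem sgn_sq {α : Type} [Fintype α] [DecidableEq α] (τ : Equiv.Perm α) (c : ℕ) :
    ((Equiv.Perm.sign τ : ℤ) : ℂ) ^ c * ((Equiv.Perm.sign τ : ℤ) : ℂ) ^ c = 1 := by
  rw [← mul_pow]
  rcases Int.units_eq_one_or (Equiv.Perm.sign τ) with h | h <;> rw [h] <;> simp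

theorem star_Xw (p q : ℕ) [NeZero p] [NeZero q] (c b : ℕ) (x : Fin p → Equiv.Perm (Fin q)) (τ : Equiv.Perm (Fin p)) :
    (starRingEnd ℂ) (Xw p q c b x τ) = Xw p q c b x τ := by
  simp [Xw, star_Tc, star_chi]

theorem Xw_orth (p q : ℕ) [NeZero p] [NeZero q] (c b c' b' : ℕ) (hc : c < q) (hc' : c' < q)
    (hb : b < p) (hb' : b' < p) :
    ∑ τ, ∑ x, Xw p q c b x τ * Xw p q c' b' x τ =
      if c = c' ∧ b = b' then (q.factorial : ℂ) ^ p * p.factorial else 0 := by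
  have h1 : ∀ τ, ∑ x, Xw p q c b x τ * Xw p q c' b' x τ =
      (if c = c' then (q.factorial : ℂ) ^ p else 0) * (chi p b τ * chi p b' τ) := by
    intro τ
    have h2 : ∀ x, Xw p q c b x τ * Xw p q c' b' x τ = ((Equiv.Perm.sign τ : ℤ) : ℂ) ^ c *
      ((Equiv.Perm.sign τ : ℤ) : ℂ) ^ c' * (chi p b τ * chi p b' τ) * (Tc q c p x τ * Tc q c' p x τ) := by
      intro x; simp only [Xw]; ring
    simp_rw [h2]
    rw [← Finset.mul_sum, sum_Tc_Tc q c c' p hc hc']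
    split_ifs with h
    · subst h; rw [sgn_sq]; ring
    · simp
  simp_rw [h1]
  rw [← Finset.mul_sum, chi_orth p b b' hb hb', ite_and]
  split_ifs <;> simp

theorem WD_shear (p q : ℕ) (x : Fin p → Equiv.Perm (Fin q)) (τ : Equiv.Perm (Fin p)) (t : ℂ) :
    WD (Fin q) p x (fun _ => t) τ = DD t (Equiv.prodShear τ x : Equiv.Perm (Fin p × Fin q)) := by
  rw [WD, DD]
  congr 1
  ext i j
  simp [pm, Prod.ext_iff]

theorem mixed_orth (p q n : ℕ) [NeZero p] [NeZero q] [NeZero n] (hn : n = p * q)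
    (W : (Fin p → Equiv.Perm (Fin q)) → Equiv.Perm (Fin p) → Equiv.Perm (Fin n))
    (hW : ∀ x τ t, DD t (W x τ) = WD (Fin q) p x (fun _ => t) τ)
    (r c b : ℕ) (hr : r < n) (hc : c < q) (hb : b < p) :
    ∑ τ, ∑ x, chi n r (W x τ) * Xw p q c b x τ =
      if r = c * p + b then (q.factorial : ℂ) ^ p * p.factorial else 0 := by
  have hlt : c * p + b < n := by
    rw [hn]; nlinarith
  refine coeff_unique n (fun r => ∑ τ, ∑ x, chi n r (W x τ) * Xw p q c b x τ)
    (fun r => if r = c * p + b then (q.factorial : ℂ) ^ p * p.factorial else 0) ?_ r hr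
  intro t ht
  have ht' : 1 + t ≠ 0 := fun h => ht (by linear_combination h)
  apply mul_left_cancel₀ ht'
  have h1 : (1 + t) * ∑ r ∈ Finset.range n, (∑ τ, ∑ x, chi n r (W x τ) * Xw p q c b x τ) * t ^ r =
      ∑ τ, ∑ x, DD t (W x τ) * Xw p q c b x τ := by
    simp_rw [DD_chi, Finset.sum_mul]
    rw [Finset.sum_comm, Finset.mul_sum]
    refine Finset.sum_congr rfl fun τ _ => ?_
    rw [Finset.sum_comm, Finset.mul_sum]
    refine Finset.sum_congr rfl fun x _ => ?_
    rw [mul_assoc, Finset.sum_mul]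
    congr 1
    refine Finset.sum_congr rfl fun r _ => ?_
    ring
  rw [h1]
  have h2 : ∀ τ, ∑ x, DD t (W x τ) * Xw p q c b x τ =
      (q.factorial : ℂ) ^ p * (t ^ c) ^ p * (DD t τ * chi p b τ) := by
    intro τ
    have h3 : ∀ x, DD t (W x τ) * Xw p q c b x τ = ((Equiv.Perm.sign τ : ℤ) : ℂ) ^ c * chi p b τ *
      (WD (Fin q) p x (fun _ => t) τ * Tc q c p x τ) := by
      intro x; rw [hW]; simp only [Xw]; ring
    simp_rw [h3]
    rw [← Finset.mul_sum, sum_WD_Tc q c p hc]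
    linear_combination (chi p b τ * (q.factorial : ℂ) ^ p * DD t τ * (t ^ c) ^ p) * sgn_sq τ c
  simp_rw [h2]
  rw [← Finset.mul_sum, sum_DD_chi p b hb]
  simp [hlt]
  rw [← pow_mul, pow_add]
  ring

open Polynomial in
theorem ms_poly (N : ℕ) [NeZero N] (ζ : ℂ) (hζ : IsPrimitiveRoot ζ N) (s : Multiset ℂ) (hs : ∀ z ∈ s, z ^ N = 1) :
    ∃ f : ℤ[X], aeval ζ f = s.sum ∧ f.eval 1 = (s.card : ℤ) := by
  induction s using Multiset.induction_on with
  | empty => exact ⟨0, by simp, by simp⟩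
  | cons z s ih =>
    obtain ⟨f, hf, hf1⟩ := ih (fun w hw => hs w (Multiset.mem_cons_of_mem hw))
    obtain ⟨i, _, hi⟩ := hζ.eq_pow_of_pow_eq_one (hs z (Multiset.mem_cons_self z s))
    refine ⟨X ^ i + f, ?_, ?_⟩
    · simp [hf, hi]
    · simp [hf1, add_comm]

open Polynomial in
theorem trace_mod {ι : Type*} [Fintype ι] [DecidableEq ι] (p m : ℕ) (hp : p.Prime) (M : Matrix ι ι ℂ)
    (hM : M ^ (p ^ (m + 1)) = 1) (ε : ℤ) (hε : M.trace = ε) : (p : ℤ) ∣ (Fintype.card ι : ℤ) - ε := by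
  have : Fact p.Prime := ⟨hp⟩
  have hN : 0 < p ^ (m + 1) := pow_pos hp.pos _
  have : NeZero (p ^ (m + 1)) := ⟨hN.ne'⟩
  have hζ := Complex.isPrimitiveRoot_exp (p ^ (m + 1)) hN.ne'
  generalize Complex.exp (2 * Real.pi * Complex.I / ((p ^ (m + 1) : ℕ) : ℂ)) = ζ at hζ
  have hroots : ∀ z ∈ M.charpoly.roots, z ^ (p ^ (m + 1)) = 1 := by
    intro z hz
    have h1 : z ∈ spectrum ℂ M := Matrix.mem_spectrum_iff_isRoot_charpoly.2 (isRoot_of_mem_roots hz)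
    have h2 : z ^ (p ^ (m + 1)) ∈ spectrum ℂ (M ^ (p ^ (m + 1))) := spectrum.pow_mem_pow M _ h1
    rw [hM] at h2
    have : Nontrivial (Matrix ι ι ℂ) := by
      by_contra hn
      rw [not_nontrivial_iff_subsingleton] at hn
      rw [spectrum.of_subsingleton] at h2
      exact h2
    rw [spectrum.one_eq] at h2
    exact h2
  obtain ⟨f, hf, hf1⟩ := ms_poly _ ζ hζ _ hroots
  have hcard : M.charpoly.roots.card = Fintype.card ι := by
    rw [← (IsAlgClosed.splits M.charpoly).natDegree_eq_card_roots, Matrix.charpoly_natDegree_eq_dim]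
  rw [hcard] at hf1
  rw [← Matrix.trace_eq_sum_roots_charpoly, hε] at hf
  have hd : cyclotomic (p ^ (m + 1)) ℤ ∣ f - C ε := by
    rw [cyclotomic_eq_minpoly hζ hN]
    exact minpoly.isIntegrallyClosed_dvd (hζ.isIntegral hN) (by simp [hf])
  have h := eval_dvd (x := 1) hd
  simpa [hf1] using h

open scoped ComplexOrder in
theorem posdef_inv {ι G : Type*} [Fintype ι] [DecidableEq ι] [Group G] [Fintype G]
    (ρ : G →* Matrix ι ι ℂ) (h : G) : (ρ h⁻¹).trace = (starRingEnd ℂ) (ρ h).trace := by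
  let A : Matrix ι ι ℂ := ∑ g, (ρ g).conjTranspose * ρ g
  have hA : A.PosDef := by
    have : A = (ρ 1).conjTranspose * ρ 1 + ∑ g ∈ Finset.univ.erase 1, (ρ g).conjTranspose * ρ g :=
      (Finset.add_sum_erase _ _ (Finset.mem_univ 1)).symm
    rw [this]
    refine Matrix.PosDef.add_posSemidef ?_ (Matrix.posSemidef_sum _ fun g _ => Matrix.posSemidef_conjTranspose_mul_self _)
    rw [map_one, Matrix.conjTranspose_one, one_mul]
    exact Matrix.PosDef.one
  have hu : IsUnit A := hA.isUnit
  have h1 : (ρ h).conjTranspose * A * ρ h = A := by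
    simp only [A, Finset.mul_sum, Finset.sum_mul]
    refine Fintype.sum_equiv (Equiv.mulRight h) _ _ fun g => ?_
    simp [Matrix.mul_assoc]
  have h2 : (ρ h).conjTranspose * A = A * ρ h⁻¹ := by
    have : (ρ h).conjTranspose * A * ρ h * ρ h⁻¹ = A * ρ h⁻¹ := by rw [h1]
    rwa [Matrix.mul_assoc _ (ρ h), ← map_mul, mul_inv_cancel, map_one, Matrix.mul_one] at this
  obtain ⟨u, hu⟩ := hu
  have h3 : ρ h⁻¹ = (u⁻¹ : (Matrix ι ι ℂ)ˣ) * ((ρ h).conjTranspose * A) := by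
    rw [h2, ← hu, ← Matrix.mul_assoc, u.inv_mul, Matrix.one_mul]
  rw [h3, ← Matrix.mul_assoc, Matrix.trace_mul_comm, ← hu, ← Matrix.mul_assoc, u.mul_inv, Matrix.one_mul, Matrix.trace_conjTranspose]
  rfl

/-- the function is the character of a matrix representation -/
def IsChar {G : Type} [Group G] (X : G → ℂ) : Prop :=
  ∃ (ι : Type) (_ : Fintype ι) (_ : DecidableEq ι) (ρ : G →* Matrix ι ι ℂ), ∀ g, X g = (ρ g).trace

theorem isChar_fdrep {G : Type} [Group G] (V : FDRep ℂ G) : IsChar V.character := by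
  let b := Module.finBasis ℂ V
  refine ⟨Fin (Module.finrank ℂ V), inferInstance, inferInstance,
    ((LinearMap.toMatrixAlgEquiv b : (V →ₗ[ℂ] V) →* Matrix _ _ ℂ)).comp V.ρ, fun g => ?_⟩
  exact LinearMap.trace_eq_matrix_trace ℂ b (V.ρ g)

theorem IsChar.fdrep {G : Type} [Group G] {X : G → ℂ} (h : IsChar X) : ∃ V : FDRep ℂ G, V.character = X := by
  obtain ⟨ι, _, _, ρ, hρ⟩ := h
  refine ⟨FDRep.of (((Matrix.toLinAlgEquiv' : Matrix ι ι ℂ ≃ₐ[ℂ] _) : Matrix ι ι ℂ →* ((ι → ℂ) →ₗ[ℂ] (ι → ℂ))).comp ρ), ?_⟩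
  funext g
  rw [hρ]
  exact Matrix.trace_toLin'_eq _

theorem IsChar.inv {G : Type} [Group G] [Fintype G] {X : G → ℂ} (h : IsChar X) (g : G) : X g⁻¹ = (starRingEnd ℂ) (X g) := by
  obtain ⟨ι, _, _, ρ, hρ⟩ := h
  rw [hρ, hρ, posdef_inv]

theorem IsChar.mod {G : Type} [Group G] (V : FDRep ℂ G) (p m : ℕ) (hp : p.Prime) (g : G) (hg : g ^ p ^ (m + 1) = 1)
    (ε : ℤ) (hε : V.character g = ε) : (p : ℤ) ∣ (Module.finrank ℂ V : ℤ) - ε := by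
  obtain ⟨ι, _, _, ρ, hρ⟩ := isChar_fdrep V
  have h1 : Fintype.card ι = Module.finrank ℂ V := by
    have := hρ 1
    rw [FDRep.char_one, map_one, Matrix.trace_one] at this
    exact_mod_cast this.symm
  rw [← h1]
  exact trace_mod p m hp (ρ g) (by rw [← map_pow, hg, map_one]) ε (by rw [← hρ, hε])

/-- class indicator -/
def dl {G : Type} [Group G] [Fintype G] (g x : G) : ℂ := ∑ y : G, if y * g * y⁻¹ = x then 1 else 0

theorem dl_pair {G : Type} [Group G] [Fintype G] (g : G) (F : G → ℂ) :
    ∑ x, dl g x * F x = ∑ y, F (y * g * y⁻¹) := by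
  simp only [dl, Finset.sum_mul]
  rw [Finset.sum_comm]
  simp

theorem dl_dl {G : Type} [Group G] [Fintype G] (g : G) :
    ∑ x, dl g x * dl g x = (Fintype.card G : ℂ) * (Fintype.card {y : G // y * g = g * y} : ℂ) := by
  rw [dl_pair]
  have : ∀ z : G, dl g (z * g * z⁻¹) = (Fintype.card {y : G // y * g = g * y} : ℂ) := by
    intro z
    unfold dl
    rw [Finset.sum_boole, Fintype.card_subtype]
    congr 1
    refine Finset.card_bij (fun y _ => z⁻¹ * y) ?_ ?_ ?_
    · intro y hy
      simp only [Finset.mem_filter, Finset.mem_univ, true_and] at hy ⊢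
      have h2 : y * g = z * g * z⁻¹ * y := by rw [← hy]; group
      rw [mul_assoc, h2]; group
    · intro a _ b _ h
      exact mul_left_cancel h
    · intro y hy
      simp only [Finset.mem_filter, Finset.mem_univ, true_and] at hy
      refine ⟨z * y, ?_, by group⟩
      simp only [Finset.mem_filter, Finset.mem_univ, true_and]
      rw [mul_assoc z y g, hy]; group
  simp [this]

theorem bessel {G I : Type} [Group G] [Fintype G] [Fintype I] (X : I → G → ℂ)
    (hcl : ∀ i y g, X i (y * g * y⁻¹) = X i g)
    (hreal : ∀ i g, (starRingEnd ℂ) (X i g) = X i g)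
    (horth : ∀ i j, ∑ g, X i g * X j g = if i = j then (Fintype.card G : ℂ) else 0)
    (g : G) (hval : ∀ i, X i g = 1 ∨ X i g = -1)
    (hC : Fintype.card {y : G // y * g = g * y} ≤ Fintype.card I) (x : G) :
    dl g x = ∑ i, X i g * X i x := by
  set F : G → ℂ := fun x => ∑ i, X i g * X i x with hF
  have hsq : ∀ i, X i g * X i g = 1 := fun i => by rcases hval i with h | h <;> simp [h]
  have hFg : F g = Fintype.card I := by simp [hF, hsq]
  have hFc : ∀ y, F (y * g * y⁻¹) = F g := fun y => by simp [hF, hcl]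
  have hFF : ∑ x, F x * F x = (Fintype.card G : ℂ) * Fintype.card I := by
    have : ∀ x, F x * F x = ∑ i, ∑ j, X i g * X j g * (X i x * X j x) := by
      intro x
      simp only [hF, Finset.sum_mul_sum]
      refine Finset.sum_congr rfl fun i _ => Finset.sum_congr rfl fun j _ => by ring
    simp only [this]
    rw [Finset.sum_comm]
    have : ∀ i, ∑ x, ∑ j, X i g * X j g * (X i x * X j x) = Fintype.card G := by
      intro i
      rw [Finset.sum_comm]
      simp only [← Finset.mul_sum, horth]
      simp [hsq]
    simp [this, mul_comm]
  have hdF : ∑ x, dl g x * F x = (Fintype.card G : ℂ) * Fintype.card I := by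
    rw [dl_pair]; simp [hFc, hFg]
  have htot : ∑ x, (dl g x - F x) * (dl g x - F x) =
      (Fintype.card G : ℂ) * ((Fintype.card {y : G // y * g = g * y} : ℂ) - Fintype.card I) := by
    have : ∀ x, (dl g x - F x) * (dl g x - F x) = dl g x * dl g x - 2 * (dl g x * F x) + F x * F x := fun x => by ring
    simp only [this, Finset.sum_add_distrib, Finset.sum_sub_distrib, ← Finset.mul_sum, dl_dl, hdF, hFF]
    ring
  have hr : ∀ x, (((dl g x - F x).re : ℝ) : ℂ) = dl g x - F x := by
    intro x
    rw [← Complex.conj_eq_iff_re]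
    rw [map_sub]
    congr 1
    · unfold dl
      rw [map_sum]
      refine Finset.sum_congr rfl fun y _ => by split_ifs <;> simp
    · simp only [hF, map_sum, map_mul, hreal]
  have htot2 : ∑ x, (dl g x - F x).re * (dl g x - F x).re =
      (Fintype.card G : ℝ) * ((Fintype.card {y : G // y * g = g * y} : ℝ) - Fintype.card I) := by
    have h : ((∑ x, (dl g x - F x).re * (dl g x - F x).re : ℝ) : ℂ) = 
      (((Fintype.card G : ℝ) * ((Fintype.card {y : G // y * g = g * y} : ℝ) - Fintype.card I) : ℝ) : ℂ) := by
      push_cast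
      simp only [hr]
      rw [htot]
    exact_mod_cast h
  have hle : ∑ x, (dl g x - F x).re * (dl g x - F x).re ≤ 0 := by
    rw [htot2]
    refine mul_nonpos_of_nonneg_of_nonpos (by positivity) ?_
    have : (Fintype.card {y : G // y * g = g * y} : ℝ) ≤ Fintype.card I := by exact_mod_cast hC
    linarith
  have h0 := (Finset.sum_eq_zero_iff_of_nonneg (fun x _ => mul_self_nonneg (dl g x - F x).re)).1
    (le_antisymm hle (Finset.sum_nonneg fun x _ => mul_self_nonneg (dl g x - F x).re)) x (Finset.mem_univ _)
  have h1 := hr x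
  rw [mul_self_eq_zero.1 h0] at h1
  exact (sub_eq_zero.1 (by rw [← h1]; simp))

theorem classify (p m : ℕ) (hp : p.Prime) {G I : Type} [Group G] [Fintype G] [Fintype I] (X : I → G → ℂ)
    (hX : ∀ i, IsChar (X i))
    (hreal : ∀ i g, (starRingEnd ℂ) (X i g) = X i g)
    (horth : ∀ i j, ∑ g, X i g * X j g = if i = j then (Fintype.card G : ℂ) else 0)
    (g : G) (hg : g ^ p ^ (m + 1) = 1) (hval : ∀ i, X i g = 1 ∨ X i g = -1)
    (hC : Nat.card {y : G // y * g = g * y} ≤ Nat.card I) :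
    (∀ i, X i ∈ IrrCoprime p G) ∧ (∀ ψ ∈ IrrCoprime p G, ∃ i, X i = ψ) ∧ Function.Injective X := by
  have hinv : ∀ i g, X i g⁻¹ = X i g := fun i g => by rw [(hX i).inv, hreal]
  choose V hV using fun i => (hX i).fdrep
  have hcl : ∀ i y g, X i (y * g * y⁻¹) = X i g := fun i y g => by
    rw [← hV i]; exact FDRep.char_conj _ _ _
  have hG : (Fintype.card G : ℂ) ≠ 0 := by exact_mod_cast Fintype.card_ne_zero
  have hsimple : ∀ i, CategoryTheory.Simple (V i) := by
    intro i
    rw [FDRep.simple_iff_char_is_norm_one]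
    simp only [hV, hinv]
    rw [horth, if_pos rfl, Nat.card_eq_fintype_card]
  have hb := bessel X hcl hreal horth g hval (by rwa [Nat.card_eq_fintype_card, Nat.card_eq_fintype_card] at hC)
  refine ⟨fun i => ⟨V i, hsimple i, hV i, ?_⟩, ?_, ?_⟩
  · rw [Nat.coprime_comm, hp.coprime_iff_not_dvd]
    intro hd
    have hd' : (p : ℤ) ∣ (Module.finrank ℂ (V i) : ℤ) := by exact_mod_cast hd
    rcases hval i with h | h
    · have h1 := IsChar.mod (V i) p m hp g hg 1 (by rw [hV, h]; simp)
      have h2 := (dvd_sub_right hd').1 h1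
      exact hp.one_lt.ne' (by exact_mod_cast Int.eq_one_of_dvd_one (by positivity) h2)
    · have h1 := IsChar.mod (V i) p m hp g hg (-1) (by rw [hV, h]; simp)
      have h2 := (dvd_sub_right hd').1 h1
      rw [dvd_neg] at h2
      exact hp.one_lt.ne' (by exact_mod_cast Int.eq_one_of_dvd_one (by positivity) h2)
  · rintro ψ ⟨W, hW, rfl, hc⟩
    by_contra hne
    push Not at hne
    have : Invertible (Nat.card G : ℂ) := invertibleOfNonzero (by rw [Nat.card_eq_fintype_card]; exact hG)
    have ho : ∀ i, ∑ x, X i x * W.character x = 0 := by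
      intro i
      have := hsimple i
      have h := FDRep.char_orthonormal W (V i)
      rw [if_neg] at h
      · rw [mul_eq_zero] at h
        rcases h with h | h
        · rw [Nat.card_eq_fintype_card] at h
          exact absurd h (inv_ne_zero hG)
        · rw [← h]
          refine Finset.sum_congr rfl fun x _ => ?_
          rw [hV, hinv, mul_comm]
      · rintro ⟨e⟩
        exact hne i (by rw [← hV i]; exact (FDRep.char_iso e).symm)
    have h1 : ∑ x, dl g x * W.character x = 0 := by
      simp only [hb, Finset.sum_mul]
      rw [Finset.sum_comm]
      simp only [mul_assoc, ← Finset.mul_sum, ho]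
      simp
    rw [dl_pair] at h1
    simp only [FDRep.char_conj, Finset.sum_const, Finset.card_univ, nsmul_eq_mul, mul_eq_zero, hG, false_or] at h1
    have h2 := IsChar.mod W p m hp g hg 0 (by rw [h1]; simp)
    rw [sub_zero] at h2
    have h3 : p ∣ Module.finrank ℂ W := by exact_mod_cast h2
    rw [Nat.coprime_comm, hp.coprime_iff_not_dvd] at hc
    exact hc h3
  · intro i j hij
    by_contra hne
    have h1 := horth i j
    have h2 := horth i i
    rw [if_neg hne, ← hij] at h1
    rw [if_pos rfl, h1] at h2
    exact hG h2.symm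

theorem IsTr.comm {n : ℕ} [NeZero n] {σ : Equiv.Perm (Fin n)} (h : IsTr σ) {a b : Equiv.Perm (Fin n)}
    (ha : a * σ = σ * a) (hb : b * σ = σ * b) (h0 : a 0 = b 0) : a = b := by
  have : {i | a i = b i} = Set.univ := by
    refine h _ ⟨0, h0⟩ fun i hi => ?_
    have h1 := DFunLike.congr_fun ha i
    have h2 := DFunLike.congr_fun hb i
    simp only [Equiv.Perm.mul_apply, Set.mem_ofPred_eq] at h1 h2 hi ⊢
    rw [h1, h2, hi]
  ext i
  have hi : i ∈ {i | a i = b i} := this ▸ Set.mem_univ i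
  rw [hi]

theorem IsTr.pow {n : ℕ} [NeZero n] {σ : Equiv.Perm (Fin n)} (h : IsTr σ) : σ ^ n = 1 := by
  have h1 : {i | ∃ k : ℕ, (σ ^ k) 0 = i} = Set.univ := by
    refine h _ ⟨0, 0, rfl⟩ ?_
    rintro i ⟨k, rfl⟩
    exact ⟨k + 1, by rw [pow_succ']; rfl⟩
  have hbij : Function.Bijective (fun y : Subgroup.zpowers σ => (y : Equiv.Perm (Fin n)) 0) := by
    constructor
    · rintro ⟨a, k, rfl⟩ ⟨b, l, rfl⟩ hab
      exact Subtype.ext (h.comm ((Commute.refl σ).zpow_left k) ((Commute.refl σ).zpow_left l) hab)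
    · intro i
      obtain ⟨k, hk⟩ : i ∈ {i | ∃ k : ℕ, (σ ^ k) 0 = i} := h1 ▸ Set.mem_univ i
      exact ⟨⟨σ ^ k, k, by simp⟩, hk⟩
  have hc := Nat.card_eq_of_bijective _ hbij
  rw [Nat.card_zpowers, Nat.card_fin] at hc
  exact orderOf_dvd_iff_pow_eq_one.1 hc.dvd

/-- matrix of the tensor induced representation -/
def tenM {G ι : Type} [Group G] [Fintype ι] [DecidableEq ι] (ρ : G →* Matrix ι ι ℂ) (m : ℕ) (x : Fin m → G)
    (τ : Equiv.Perm (Fin m)) : Matrix (Fin m → ι) (Fin m → ι) ℂ :=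
  Matrix.of fun f f' => ∏ i, ρ (x i) (f (τ i)) (f' i)

theorem trace_tenM {G ι : Type} [Group G] [Fintype ι] [DecidableEq ι] (ρ : G →* Matrix ι ι ℂ) (m : ℕ) (x : Fin m → G)
    (τ : Equiv.Perm (Fin m)) : (tenM ρ m x τ).trace = TT ρ m x τ := rfl

theorem tenM_one {G ι : Type} [Group G] [Fintype ι] [DecidableEq ι] (ρ : G →* Matrix ι ι ℂ) (m : ℕ) :
    tenM ρ m 1 1 = 1 := by
  ext f f'
  simp only [tenM, Matrix.of_apply, Pi.one_apply, map_one, Matrix.one_apply, Equiv.Perm.one_apply]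
  rw [Finset.prod_ite_zero]
  simp [funext_iff]

theorem tenM_mul {G ι : Type} [Group G] [Fintype ι] [DecidableEq ι] (ρ : G →* Matrix ι ι ℂ) (m : ℕ) (x x' : Fin m → G)
    (τ τ' : Equiv.Perm (Fin m)) :
    tenM ρ m (fun i => x (τ' i) * x' i) (τ * τ') = tenM ρ m x τ * tenM ρ m x' τ' := by
  ext f f''
  rw [Matrix.mul_apply]
  simp only [tenM, Matrix.of_apply, map_mul, Matrix.mul_apply, Equiv.Perm.mul_apply]
  rw [Finset.prod_univ_sum, Fintype.piFinset_univ]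
  refine (Fintype.sum_equiv (Equiv.arrowCongr τ'.symm (Equiv.refl ι)) _ _ fun f' => ?_).symm
  rw [← Equiv.prod_comp τ', ← Finset.prod_mul_distrib]
  refine Finset.prod_congr rfl fun i _ => ?_
  simp [Equiv.arrowCongr]

theorem isChar_Xw {K : Type} [Group K] (p q : ℕ) [NeZero p] [NeZero q] (c b : ℕ)
    (x : K → Fin p → Equiv.Perm (Fin q)) (τ : K → Equiv.Perm (Fin p))
    (hx1 : x 1 = 1) (ht1 : τ 1 = 1)
    (hx : ∀ h h', x (h * h') = fun i => x h (τ h' i) * x h' i) (ht : ∀ h h', τ (h * h') = τ h * τ h') :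
    IsChar (fun h => Xw p q c b (x h) (τ h)) := by
  refine ⟨_, inferInstance, inferInstance,
    { toFun := fun h => (((Equiv.Perm.sign (τ h) : ℤ) : ℂ) ^ c) •
        Matrix.kroneckerMap (· * ·) (tenM (chiRep q c) p (x h) (τ h)) (chiRep p b (τ h))
      map_one' := ?_
      map_mul' := ?_ }, ?_⟩
  · rw [hx1, ht1, tenM_one, map_one, map_one]
    simp
  · intro h h'
    rw [hx, ht, tenM_mul, map_mul, map_mul, Matrix.mul_kronecker_mul, Matrix.smul_mul, Matrix.mul_smul, smul_smul,
      ← mul_pow]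
    simp
  · intro h
    simp only [MonoidHom.coe_mk, OneHom.coe_mk]
    rw [Matrix.trace_smul, Matrix.trace_kronecker, trace_tenM, trace_chiRep, smul_eq_mul, ← mul_assoc]
    rfl

open Fin.NatCast Fin.CommRing in
theorem isTr_finRotate (n : ℕ) [NeZero n] : IsTr (finRotate n) := by
  intro A ⟨a, ha⟩ hA
  have h : ∀ k : ℕ, a + (k : Fin n) ∈ A := by
    intro k
    induction k with
    | zero => simpa using ha
    | succ k ih =>
      have := hA _ ih
      rw [finRotate_apply] at this
      rw [Nat.cast_succ, ← add_assoc]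
      exact this
  ext b
  simp only [Set.mem_univ, iff_true]
  have := h (b - a).val
  rw [Fin.cast_val_eq_self] at this
  simpa using this

/-- bottom part of the long cycle -/
def x0 (p q : ℕ) : Fin p → Equiv.Perm (Fin q) := fun i => if (i : ℕ) + 1 = p then finRotate q else 1

theorem isTr_shear (p q : ℕ) [NeZero p] [NeZero q] :
    IsTr (Equiv.prodShear (finRotate p) (x0 p q) : Equiv.Perm (Fin p × Fin q)) := by
  obtain ⟨P, rfl⟩ : ∃ P, p = P + 1 := ⟨p - 1, (Nat.succ_pred (NeZero.ne p)).symm⟩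
  intro A ⟨⟨i, j⟩, ha⟩ hA
  have s1 : ∀ (i : Fin P) j, (i.castSucc, j) ∈ A → (i.succ, j) ∈ A := by
    intro i j h
    have := hA _ h
    simpa [Equiv.prodShear, x0, i.2.ne] using this
  have s2 : ∀ j, (Fin.last P, j) ∈ A → (0, finRotate q j) ∈ A := by
    intro j h
    have := hA _ h
    simpa only [Equiv.prodShear, x0, Fin.val_last, if_true, Equiv.coe_fn_mk, finRotate_last] using this
  have s3 : ∀ (i : Fin (P + 1)) j, (i, j) ∈ A → (0, finRotate q j) ∈ A := by
    intro i
    induction i using Fin.reverseInduction with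
    | last => exact s2
    | cast i ih => exact fun j h => ih j (s1 i j h)
  have s4 : ∀ (i : Fin (P + 1)) j, (0, j) ∈ A → (i, j) ∈ A := by
    intro i
    induction i using Fin.induction with
    | zero => exact fun j h => h
    | succ i ih => exact fun j h => s1 i j (ih j h)
  have hS := isTr_finRotate q {j | ((0 : Fin (P + 1)), j) ∈ A} ⟨_, s3 i j ha⟩ (fun j hj => s3 0 j hj)
  ext ⟨i', j'⟩
  simp only [Set.mem_univ, iff_true]
  have : j' ∈ {j | ((0 : Fin (P + 1)), j) ∈ A} := hS ▸ Set.mem_univ j'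
  exact s4 i' j' this

theorem IsTr.permCongr {α β : Type} (e : α ≃ β) {σ : Equiv.Perm α} (h : IsTr σ) : IsTr (e.permCongr σ) := by
  intro A ⟨a, ha⟩ hA
  have := h (e ⁻¹' A) ⟨e.symm a, by simpa using ha⟩ (fun i hi => by simpa using hA _ hi)
  ext b
  simp only [Set.mem_univ, iff_true]
  have hb : e.symm b ∈ e ⁻¹' A := this ▸ Set.mem_univ _
  simpa using hb

theorem Tc_cycle (p q : ℕ) [NeZero p] [NeZero q] (c : ℕ) :
    Tc q c p (x0 p q) (finRotate p) = chi q c (finRotate q) := by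
  obtain ⟨P, rfl⟩ : ∃ P, p = P + 1 := ⟨p - 1, (Nat.succ_pred (NeZero.ne p)).symm⟩
  rw [Tc, TT, ← trace_chiRep, Matrix.trace]
  symm
  have e1 : ∀ i : Fin P, x0 (P + 1) q i.castSucc = 1 := fun i => by simp [x0, i.2.ne]
  have e2 : x0 (P + 1) q (Fin.last P) = finRotate q := by simp [x0]
  have e3 : ∀ i : Fin P, finRotate (P + 1) i.castSucc = i.succ := fun i => by simp
  refine Fintype.sum_of_injective (fun a _ => a) (fun a b h => congrFun h 0) _ _ ?_ ?_
  · intro f hf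
    rw [Fin.prod_univ_castSucc]
    simp only [e1, e2, e3, map_one, Matrix.one_apply]
    rw [Finset.prod_ite_zero, if_neg, zero_mul]
    intro h
    apply hf
    refine ⟨f 0, ?_⟩
    funext i
    induction i using Fin.induction with
    | zero => rfl
    | succ i ih => rw [h i (Finset.mem_univ _)]; exact ih
  · intro a
    rw [Fin.prod_univ_castSucc]
    simp [e1, e2]

theorem pm_one_mul {a b : ℂ} (ha : a = 1 ∨ a = -1) (hb : b = 1 ∨ b = -1) : a * b = 1 ∨ a * b = -1 := by
  rcases ha with rfl | rfl <;> rcases hb with rfl | rfl <;> simp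

theorem Xw_cycle (p q : ℕ) [NeZero p] [NeZero q] (c b : ℕ) (hc : c < q) (hb : b < p) :
    Xw p q c b (x0 p q) (finRotate p) = 1 ∨ Xw p q c b (x0 p q) (finRotate p) = -1 := by
  unfold Xw
  rw [Tc_cycle, (isTr_finRotate q).chi c hc, (isTr_finRotate p).chi b hb]
  refine pm_one_mul (pm_one_mul ?_ (neg_one_pow_eq_or _ _)) (neg_one_pow_eq_or _ _)
  rcases Int.units_eq_one_or (Equiv.Perm.sign (finRotate p)) with h | h <;> rw [h]
  · left; simp
  · simpa using neg_one_pow_eq_or ℂ c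

/-- embedding of the wreath product -/
def Phi {p q N : ℕ} (β : Fin p × Fin q ≃ Fin N) (z : (Fin p → Equiv.Perm (Fin q)) × Equiv.Perm (Fin p)) :
    Equiv.Perm (Fin N) := β.permCongr (Equiv.prodShear z.2 z.1)

theorem Phi_apply {p q N : ℕ} (β : Fin p × Fin q ≃ Fin N) (x : Fin p → Equiv.Perm (Fin q)) (τ : Equiv.Perm (Fin p))
    (i : Fin p) (j : Fin q) : Phi β (x, τ) (β (i, j)) = β (τ i, x i j) := by
  simp [Phi, Equiv.prodShear]

theorem Phi_mul {p q N : ℕ} (β : Fin p × Fin q ≃ Fin N) (x x' : Fin p → Equiv.Perm (Fin q)) (τ τ' : Equiv.Perm (Fin p)) :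
    Phi β (x, τ) * Phi β (x', τ') = Phi β (fun i => x (τ' i) * x' i, τ * τ') := by
  refine Equiv.ext fun a => ?_
  obtain ⟨⟨i, j⟩, rfl⟩ := β.surjective a
  rw [Equiv.Perm.mul_apply, Phi_apply, Phi_apply, Phi_apply]
  rfl

theorem Phi_inj {p q N : ℕ} [NeZero q] (β : Fin p × Fin q ≃ Fin N) : Function.Injective (Phi β) := by
  rintro ⟨x, τ⟩ ⟨x', τ'⟩ h
  have h1 : ∀ i j, (τ i, x i j) = (τ' i, x' i j) := fun i j => by
    apply β.injective
    rw [← Phi_apply, ← Phi_apply, h]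
  refine Prod.ext ?_ ?_
  · funext i
    ext j
    exact congrArg Fin.val (Prod.ext_iff.1 (h1 i j)).2
  · ext i
    exact congrArg Fin.val (Prod.ext_iff.1 (h1 i 0)).1

/-- the block condition -/
def BlockCond {p q N : ℕ} (σ : Equiv.Perm (Fin N)) : Prop :=
  ∀ r : ℕ, r < p → ∃ r' : ℕ, r' < p ∧
        (⇑σ '' {i : Fin N | (i : ℕ) / q = r}) = {i : Fin N | (i : ℕ) / q = r'}

theorem Phi_block {p q N : ℕ} (β : Fin p × Fin q ≃ Fin N) (hβ : ∀ i j, (β (i, j) : ℕ) / q = i)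
    (x : Fin p → Equiv.Perm (Fin q)) (τ : Equiv.Perm (Fin p)) : BlockCond (p := p) (q := q) (Phi β (x, τ)) := by
  intro r hr
  refine ⟨τ ⟨r, hr⟩, (τ ⟨r, hr⟩).2, ?_⟩
  ext a
  obtain ⟨⟨i, j⟩, rfl⟩ := β.surjective a
  simp only [Set.mem_image, Set.mem_ofPred_eq, hβ]
  constructor
  · rintro ⟨y, hy, h⟩
    obtain ⟨⟨i', j'⟩, rfl⟩ := β.surjective y
    rw [Phi_apply] at h
    rw [hβ] at hy
    have := (Prod.ext_iff.1 (β.injective h)).1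
    simp only at this
    subst hy
    rw [← this]
  · intro h
    have hi : i = τ ⟨r, hr⟩ := Fin.ext h
    refine ⟨β (⟨r, hr⟩, (x ⟨r, hr⟩).symm j), by rw [hβ], ?_⟩
    rw [Phi_apply, hi]
    simp

theorem block_fst {p q N : ℕ} [NeZero q] (β : Fin p × Fin q ≃ Fin N) (hβ : ∀ i j, (β (i, j) : ℕ) / q = i)
    (σ : Equiv.Perm (Fin N)) (h : BlockCond (p := p) (q := q) σ) (i : Fin p) (j j' : Fin q) :
    (β.symm (σ (β (i, j)))).1 = (β.symm (σ (β (i, j')))).1 := by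
  have hs : ∀ a : Fin N, (a : ℕ) / q = (β.symm a).1 := fun a => by
    rw [← hβ (β.symm a).1 (β.symm a).2]; simp
  obtain ⟨r', _, hr'⟩ := h i i.2
  have key : ∀ j, ((σ (β (i, j)) : Fin N) : ℕ) / q = r' := by
    intro j
    have : σ (β (i, j)) ∈ {i : Fin N | (i : ℕ) / q = r'} := by
      rw [← hr']
      exact ⟨_, hβ i j, rfl⟩
    exact this
  apply Fin.ext
  rw [← hs, ← hs, key, key]

theorem Phi_surj {p q N : ℕ} [NeZero q] (β : Fin p × Fin q ≃ Fin N) (hβ : ∀ i j, (β (i, j) : ℕ) / q = i)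
    (σ : Equiv.Perm (Fin N)) (h : BlockCond (p := p) (q := q) σ) (h' : BlockCond (p := p) (q := q) σ⁻¹) :
    ∃ z, Phi β z = σ := by
  have step : ∀ (σ : Equiv.Perm (Fin N)) (h : BlockCond (p := p) (q := q) σ) (i : Fin p) (j : Fin q),
      σ (β (i, j)) = β ((β.symm (σ (β (i, 0)))).1, (β.symm (σ (β (i, j)))).2) := by
    intro σ h i j
    rw [block_fst β hβ σ h i 0 j]
    simp
  have inv : ∀ (σ : Equiv.Perm (Fin N)) (h : BlockCond (p := p) (q := q) σ) (h' : BlockCond (p := p) (q := q) σ⁻¹) 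
      (i : Fin p), (β.symm (σ⁻¹ (β ((β.symm (σ (β (i, 0)))).1, 0)))).1 = i := by
    intro σ h h' i
    rw [block_fst β hβ σ⁻¹ h' _ 0 (β.symm (σ (β (i, 0)))).2]
    simp
  let τ : Equiv.Perm (Fin p) :=
    { toFun := fun i => (β.symm (σ (β (i, 0)))).1
      invFun := fun i => (β.symm (σ⁻¹ (β (i, 0)))).1
      left_inv := inv σ h h'
      right_inv := fun i => by simpa using inv σ⁻¹ h' (by simpa using h) i }
  have hinj : ∀ i, Function.Injective (fun j => (β.symm (σ (β (i, j)))).2) := by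
    intro i j j' hj
    simp only at hj
    have h1 := step σ h i j
    rw [hj, ← step σ h i j'] at h1
    exact (Prod.ext_iff.1 (β.injective (σ.injective h1))).2
  let x : Fin p → Equiv.Perm (Fin q) := fun i =>
    Equiv.ofBijective _ (Finite.injective_iff_bijective.1 (hinj i))
  refine ⟨(x, τ), ?_⟩
  refine Equiv.ext fun a => ?_
  obtain ⟨⟨i, j⟩, rfl⟩ := β.surjective a
  rw [Phi_apply, step σ h i j]
  rfl

theorem main_aux (p q N m : ℕ) (hp : p.Prime) [NeZero p] [NeZero q] [NeZero N] (hN : N = p * q) (hNm : N = p ^ (m + 1))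
    (β : Fin p × Fin q ≃ Fin N) (hβ : ∀ i j, (β (i, j) : ℕ) / q = i)
    (H : Subgroup (Equiv.Perm (Fin N))) (hH : ∀ σ, σ ∈ H ↔ BlockCond (p := p) (q := q) σ) :
    ∃ f : (IrrCoprime p (Equiv.Perm (Fin N))) ≃ (IrrCoprime p ↥H),
      ∀ χ : IrrCoprime p (Equiv.Perm (Fin N)),
        charInner H χ.val (f χ).val = 1 ∧
        (∀ ψ : ↥H → ℂ, ψ ∈ IrrCoprime p ↥H → charInner H χ.val ψ ≠ 0 → ψ = (f χ).val) := by
  -- parametrisation of the subgroup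
  let E : ((Fin p → Equiv.Perm (Fin q)) × Equiv.Perm (Fin p)) ≃ ↥H :=
    Equiv.ofBijective (fun z => ⟨Phi β z, (hH _).2 (Phi_block β hβ z.1 z.2)⟩)
      ⟨fun a b hab => Phi_inj β (congrArg Subtype.val hab), fun h => by
        obtain ⟨z, hz⟩ := Phi_surj β hβ h.1 ((hH _).1 h.2) ((hH _).1 (H.inv_mem h.2))
        exact ⟨z, Subtype.ext hz⟩⟩
  have hE : ∀ z, ((E z : ↥H) : Equiv.Perm (Fin N)) = Phi β z := fun z => rfl
  have hEmul : ∀ h h', E.symm (h * h') = (fun i => (E.symm h).1 ((E.symm h').2 i) * (E.symm h').1 i,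
      (E.symm h).2 * (E.symm h').2) := by
    intro h h'
    rw [Equiv.symm_apply_eq]
    apply Subtype.ext
    rw [hE, ← Phi_mul, ← hE, ← hE, Subgroup.coe_mul]
    simp
  have hE1 : E.symm 1 = (1, 1) := by
    rw [Equiv.symm_apply_eq]
    apply Subtype.ext
    rw [hE]
    refine Equiv.ext fun a => ?_
    obtain ⟨⟨i, j⟩, rfl⟩ := β.surjective a
    rw [Phi_apply]
    rfl
  have hsum : ∀ F : ↥H → ℂ, ∑ h, F h = ∑ τ, ∑ x, F (E (x, τ)) := by
    intro F
    rw [← Equiv.sum_comp E, Fintype.sum_prod_type, Finset.sum_comm]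
  have hcard : (Fintype.card ↥H : ℂ) = (q.factorial : ℂ) ^ p * p.factorial := by
    rw [← Fintype.card_congr E]
    simp [Fintype.card_perm]
  -- the long cycle
  let g : ↥H := E (x0 p q, finRotate p)
  have hg : IsTr (g : Equiv.Perm (Fin N)) := (isTr_shear p q).permCongr β
  have hgp : (g : Equiv.Perm (Fin N)) ^ p ^ (m + 1) = 1 := by
    have := hg.pow
    generalize (g : Equiv.Perm (Fin N)) = σ at this
    rwa [← hNm]
  -- the two families
  let X : Fin N → Equiv.Perm (Fin N) → ℂ := fun r => chi N r
  let Y : Fin q × Fin p → ↥H → ℂ := fun cb h => Xw p q cb.1 cb.2 (E.symm h).1 (E.symm h).2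
  have hYE : ∀ cb x τ, Y cb (E (x, τ)) = Xw p q cb.1 cb.2 x τ := fun cb x τ => by simp [Y]
  have hYstar : ∀ cb h, (starRingEnd ℂ) (Y cb h) = Y cb h := fun cb h => star_Xw _ _ _ _ _ _
  have hCX : Nat.card {y : Equiv.Perm (Fin N) // y * (g : Equiv.Perm (Fin N)) = (g : Equiv.Perm (Fin N)) * y} ≤
      Nat.card (Fin N) :=
    Nat.card_le_card_of_injective (fun y => y.1 0) fun a b hab => Subtype.ext (hg.comm a.2 b.2 hab)
  have hCY : Nat.card {y : ↥H // y * g = g * y} ≤ Nat.card (Fin q × Fin p) := by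
    have : Nat.card (Fin q × Fin p) = Nat.card (Fin N) := by simp [hN, mul_comm]
    rw [this]
    refine Nat.card_le_card_of_injective (fun y => (y.1 : Equiv.Perm (Fin N)) 0) fun a b hab => ?_
    exact Subtype.ext (Subtype.ext (hg.comm (congrArg Subtype.val a.2) (congrArg Subtype.val b.2) hab))
  obtain ⟨X1, X2, X3⟩ := classify p m hp X
    (fun r => ⟨_, inferInstance, inferInstance, chiRep N r, fun σ => (trace_chiRep N r σ).symm⟩)
    (fun r σ => star_chi N r σ)
    (fun r s => by
      have := chi_orth N r s r.2 s.2
      simp only [X]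
      rw [this, Fintype.card_perm, Fintype.card_fin]
      simp [Fin.ext_iff])
    (g : Equiv.Perm (Fin N)) hgp
    (fun r => by simp only [X]; rw [hg.chi r r.2]; exact neg_one_pow_eq_or _ _)
    hCX
  obtain ⟨Y1, Y2, Y3⟩ := classify p m hp Y
    (fun cb => isChar_Xw p q cb.1 cb.2 (fun h => (E.symm h).1) (fun h => (E.symm h).2)
      (by rw [hE1]) (by rw [hE1]) (fun h h' => by rw [hEmul]) (fun h h' => by rw [hEmul]))
    hYstar
    (fun cb cb' => by
      rw [hsum]
      simp only [hYE]
      rw [Xw_orth p q cb.1 cb.2 cb'.1 cb'.2 cb.1.2 cb'.1.2 cb.2.2 cb'.2.2, hcard]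
      simp [Prod.ext_iff, Fin.ext_iff])
    g (Subtype.ext (by simpa using hgp))
    (fun cb => by
      simp only [g, hYE]
      exact Xw_cycle p q cb.1 cb.2 cb.1.2 cb.2.2)
    hCY
  -- indexing
  let e0 : Fin q × Fin p ≃ Fin N := finProdFinEquiv.trans (finCongr (by rw [hN, mul_comm]))
  have he0 : ∀ c b, ((e0 (c, b) : Fin N) : ℕ) = c * p + b := fun c b => by
    simp [e0, finProdFinEquiv]; ring
  have hinner : ∀ r cb, charInner H (X r) (Y cb) = if r = e0 cb then 1 else 0 := by
    rintro r ⟨c, b⟩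
    unfold charInner
    rw [finsum_eq_sum_of_fintype, Nat.card_eq_fintype_card, hsum, hcard]
    simp only [hYE, hE, X, star_Xw]
    rw [mixed_orth p q N hN (fun x τ => Phi β (x, τ)) ?_ r c b r.2 c.2 b.2]
    · simp only [Fin.ext_iff, he0]
      split_ifs
      · refine inv_mul_cancel₀ (mul_ne_zero (pow_ne_zero _ ?_) ?_) <;> exact_mod_cast Nat.factorial_ne_zero _
      · simp
    · intro x τ t
      rw [WD_shear]
      refine (DD_reindex β t _ _ fun a => ?_).symm
      simp [Phi]
  let eX : Fin N ≃ IrrCoprime p (Equiv.Perm (Fin N)) :=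
    Equiv.ofBijective (fun r => ⟨X r, X1 r⟩) ⟨fun a b hab => X3 (congrArg Subtype.val hab),
      fun ψ => by obtain ⟨i, hi⟩ := X2 ψ.1 ψ.2; exact ⟨i, Subtype.ext hi⟩⟩
  let eY : Fin q × Fin p ≃ IrrCoprime p ↥H :=
    Equiv.ofBijective (fun r => ⟨Y r, Y1 r⟩) ⟨fun a b hab => Y3 (congrArg Subtype.val hab),
      fun ψ => by obtain ⟨i, hi⟩ := Y2 ψ.1 ψ.2; exact ⟨i, Subtype.ext hi⟩⟩
  refine ⟨(eX.symm.trans e0.symm).trans eY, fun χ => ?_⟩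
  obtain ⟨r, rfl⟩ := eX.surjective χ
  obtain ⟨cb, rfl⟩ := e0.surjective r
  have h1 : ((((eX.symm.trans e0.symm).trans eY) (eX (e0 cb)) : IrrCoprime p ↥H) : ↥H → ℂ) = Y cb := by
    simp only [Equiv.trans_apply, Equiv.symm_apply_apply]
    rfl
  rw [h1]
  have h2 : (eX (e0 cb)).val = X (e0 cb) := rfl
  rw [h2]
  refine ⟨by rw [hinner, if_pos rfl], fun ψ hψ hne => ?_⟩
  obtain ⟨cb', rfl⟩ := Y2 ψ hψ
  rw [hinner] at hne
  by_cases h : e0 cb = e0 cb'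
  · rw [e0.injective h]
  · rw [if_neg h] at hne
    exact absurd rfl hne

/-- **Theorem B.** Let `p` be an odd prime, `k ≥ 1`, and let `H ≤ S_{p^k}` be the stabilizer of
the partition of `{0,…,p^k-1}` into the `p` consecutive blocks of size `p^(k-1)` (the block of
`i` is `i / p^(k-1)`); so `H ≅ S_{p^(k-1)} ≀ S_p`.  For every `χ ∈ Irr_{p'}(S_{p^k})`, the
restriction of `χ` to `H` has a unique irreducible constituent `χ*` of degree coprime to `p`;
it occurs with multiplicity one, all other irreducible constituents have degree divisible by
`p`, and `χ ↦ χ*` is a bijection from `Irr_{p'}(S_{p^k})` onto `Irr_{p'}(H)`. -/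
theorem theoremB (p k : ℕ) (hp : p.Prime) (hodd : Odd p) (hk : 1 ≤ k)
    (H : Subgroup (Equiv.Perm (Fin (p ^ k))))
    (hH : ∀ σ : Equiv.Perm (Fin (p ^ k)), σ ∈ H ↔
      ∀ r : ℕ, r < p → ∃ r' : ℕ, r' < p ∧
        (⇑σ '' {i : Fin (p ^ k) | (i : ℕ) / p ^ (k - 1) = r}) =
          {i : Fin (p ^ k) | (i : ℕ) / p ^ (k - 1) = r'}) :
    ∃ f : (IrrCoprime p (Equiv.Perm (Fin (p ^ k)))) ≃ (IrrCoprime p ↥H),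
      ∀ χ : IrrCoprime p (Equiv.Perm (Fin (p ^ k))),
        charInner H χ.val (f χ).val = 1 ∧
        (∀ ψ : ↥H → ℂ, ψ ∈ IrrCoprime p ↥H → charInner H χ.val ψ ≠ 0 → ψ = (f χ).val) ∧
        (∀ ψ : ↥H → ℂ, ψ ∈ Irr ↥H → charInner H χ.val ψ ≠ 0 → ψ ≠ (f χ).val →
          ψ ∉ IrrCoprime p ↥H) := by
  obtain ⟨m, rfl⟩ : ∃ m, k = m + 1 := ⟨k - 1, by omega⟩
  have hq : 0 < p ^ m := pow_pos hp.pos _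
  have : NeZero p := ⟨hp.ne_zero⟩
  have : NeZero (p ^ m) := ⟨hq.ne'⟩
  have : NeZero (p ^ (m + 1)) := ⟨(pow_pos hp.pos _).ne'⟩
  have hN : p ^ (m + 1) = p * p ^ m := by rw [pow_succ, mul_comm]
  obtain ⟨f, hf⟩ := main_aux p (p ^ m) (p ^ (m + 1)) m hp hN rfl
    (finProdFinEquiv.trans (finCongr hN.symm))
    (fun i j => by
      simp [finProdFinEquiv, Nat.add_mul_div_left _ _ hq, Nat.div_eq_of_lt j.2])
    H hH
  exact ⟨f, fun χ => ⟨(hf χ).1, (hf χ).2, fun ψ _ hne hneq hc => hneq ((hf χ).2 ψ hc hne)⟩⟩
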